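/- arXiv:1911.11505 — 7 statements merged into one kernel-verified Lean document; each statement's English description precedes it below -/
import Mathlib

section
/- Let r ≥ 1 and m ≥ 0 be integers, let q₀, q₁, …, q_r : (0,∞) → ℂ be functions, and let f : (0,∞) → ℂ be a function that is (at least) r times differentiable. Let θ denote the operator (θ g)(t) = t·g′(t), let L = Σ_{i=0}^{r} q_i(t)·θ^{r−i}, and for 0 ≤ s ≤ r let L^{(s)} = Σ_{i=0}^{r−s} q_i(t)·(r−i)·(r−i−1)⋯(r−i−s+1)·θ^{r−i−s} (the s-th formal derivative of L with respect to θ). Then for every t > 0, L applied to the function t ↦ ((log t)^m / m!)·f(t) equals Σ_{s=0}^{m} ((log t)^{m−s}/(m−s)!)·(1/s!)·(L^{(s)} f)(t), where for s > r the operator L^{(s)} is zero. -/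
/-- The Euler operator `θ g = t·g′` acting on functions `(0,∞) → ℂ` (as total
functions `ℝ → ℂ`, using the real derivative). -/
noncomputable def theta (g : ℝ → ℂ) : ℝ → ℂ := fun t => (t : ℂ) * deriv g t

/-- The divided logarithmic power `(log t)^m / m!`, as a complex number. -/
noncomputable def logDividedPow (m : ℕ) (t : ℝ) : ℂ :=
  ((Real.log t ^ m / m.factorial : ℝ) : ℂ)

theorem hasDerivAt_logDividedPow_succ (m : ℕ) {t : ℝ} (ht : 0 < t) :
    HasDerivAt (logDividedPow (m + 1)) (logDividedPow m t / t) t := by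
  have h := (((Real.hasDerivAt_log ht.ne').pow (m + 1)).div_const
    ((m + 1).factorial : ℝ)).ofReal_comp
  refine h.congr_deriv ?_
  rw [logDividedPow, ← Complex.ofReal_div, Nat.factorial_succ]
  congr 1
  have : (m.factorial : ℝ) ≠ 0 := by exact_mod_cast m.factorial_ne_zero
  push_cast
  field_simp

/-- The derivative of `(log t)^m / m!`, with the convention that the previous divided power
vanishes for `m = 0`. -/
theorem hasDerivAt_logDividedPow (m : ℕ) {t : ℝ} (ht : 0 < t) :
    HasDerivAt (logDividedPow m) ((if m = 0 then 0 else logDividedPow (m - 1) t) / t) t := by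
  cases m with
  | zero =>
    have h : logDividedPow 0 = fun _ => 1 := by ext; simp [logDividedPow]
    simpa [h] using hasDerivAt_const t (1 : ℂ)
  | succ m => simpa using hasDerivAt_logDividedPow_succ m ht

theorem iterate_deriv_theta {n : ℕ} {f : ℝ → ℂ}
    (hf : ∀ k < n + 1, DifferentiableOn ℝ (deriv^[k] f) (Set.Ioi 0)) :
    ∀ k ≤ n, ∀ t : ℝ, 0 < t →
      deriv^[k] (theta f) t = t * deriv^[k + 1] f t + k * deriv^[k] f t := by
  intro k
  induction k with
  | zero => intro _ t _; simp [theta]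
  | succ k ih =>
    intro hk t ht
    have hmem : Set.Ioi (0 : ℝ) ∈ nhds t := Ioi_mem_nhds ht
    have heq : deriv^[k] (theta f) =ᶠ[nhds t]
        fun x => (x : ℂ) * deriv^[k + 1] f x + k * deriv^[k] f x := by
      filter_upwards [hmem] with x hx using ih (by omega) x hx
    have hd₁ := ((hf (k + 1) (by omega)).differentiableAt hmem).hasDerivAt
    have hd₀ := ((hf k (by omega)).differentiableAt hmem).hasDerivAt
    have hid : HasDerivAt (fun x : ℝ => (x : ℂ)) 1 t := by
      simpa using (hasDerivAt_id t).ofReal_comp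
    rw [Function.iterate_succ_apply' deriv k, heq.deriv_eq,
      ((hid.fun_mul hd₁).fun_add (hd₀.const_mul (k : ℂ))).deriv]
    simp only [Function.iterate_succ_apply' deriv]
    push_cast
    ring

theorem differentiableOn_iterate_deriv_theta {n : ℕ} {f : ℝ → ℂ}
    (hf : ∀ k < n + 1, DifferentiableOn ℝ (deriv^[k] f) (Set.Ioi 0)) :
    ∀ k < n, DifferentiableOn ℝ (deriv^[k] (theta f)) (Set.Ioi 0) := by
  intro k hk
  have hid : DifferentiableOn ℝ (fun x : ℝ => (x : ℂ)) (Set.Ioi 0) :=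
    Complex.ofRealCLM.differentiable.differentiableOn
  exact ((hid.fun_mul (hf (k + 1) (by omega))).fun_add
    ((hf k (by omega)).const_mul (k : ℂ))).congr
      fun t ht => iterate_deriv_theta hf k hk.le t ht

theorem differentiableOn_iterate_theta {n : ℕ} {f : ℝ → ℂ}
    (hf : ∀ k < n, DifferentiableOn ℝ (deriv^[k] f) (Set.Ioi 0)) :
    ∀ k < n, DifferentiableOn ℝ (theta^[k] f) (Set.Ioi 0) := by
  intro k
  induction k generalizing n f with
  | zero => exact fun hk => hf 0 hk
  | succ k ih =>
    intro hk
    obtain ⟨n, rfl⟩ : ∃ p, n = p + 1 := ⟨n - 1, by omega⟩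
    exact ih (differentiableOn_iterate_deriv_theta hf) (by omega)

/-- Iterates of the Euler operator satisfy a Leibniz rule on products with `(log t)^m / m!`. -/
theorem iterate_theta_logDividedPow_mul {r : ℕ} (m : ℕ) {f : ℝ → ℂ}
    (hf : ∀ k < r, DifferentiableOn ℝ (deriv^[k] f) (Set.Ioi 0)) :
    ∀ n ≤ r, ∀ t : ℝ, 0 < t →
      theta^[n] (fun x => logDividedPow m x * f x) t =
        ∑ s ∈ Finset.range (m + 1),
          (n.choose s : ℂ) * (logDividedPow (m - s) t * theta^[n - s] f t) := by
  intro n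
  induction n with
  | zero =>
    intro _ t _
    rw [Finset.sum_range_succ']
    simp
  | succ n ih =>
    intro hn t ht
    have htc : (t : ℂ) ≠ 0 := by exact_mod_cast ht.ne'
    have hmem : Set.Ioi (0 : ℝ) ∈ nhds t := Ioi_mem_nhds ht
    have heq : theta^[n] (fun x => logDividedPow m x * f x) =ᶠ[nhds t]
        fun x => ∑ s ∈ Finset.range (m + 1),
          (n.choose s : ℂ) * (logDividedPow (m - s) x * theta^[n - s] f x) := by
      filter_upwards [hmem] with x hx using ih (by omega) x hx
    have hd (s : ℕ) := ((differentiableOn_iterate_theta hf (n - s)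
      (by omega)).differentiableAt hmem).hasDerivAt
    have hsum := HasDerivAt.fun_sum (u := Finset.range (m + 1)) fun s _ =>
      ((hasDerivAt_logDividedPow (m - s) ht).fun_mul (hd s)).const_mul (n.choose s : ℂ)
    have hstep : theta^[n + 1] (fun x => logDividedPow m x * f x) t =
        ∑ s ∈ Finset.range (m + 1), (n.choose s : ℂ) *
            ((if m - s = 0 then 0 else logDividedPow (m - s - 1) t) * theta^[n - s] f t) +
          ∑ s ∈ Finset.range (m + 1), (n.choose s : ℂ) *
            (logDividedPow (m - s) t * theta^[n + 1 - s] f t) := by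
      rw [Function.iterate_succ_apply', theta, heq.deriv_eq, hsum.deriv, Finset.mul_sum,
        ← Finset.sum_add_distrib]
      refine Finset.sum_congr rfl fun s _ => ?_
      rcases le_or_gt s n with hs | hs
      · rw [Nat.sub_add_comm hs, Function.iterate_succ_apply' theta, theta]
        field_simp
      · simp [Nat.choose_eq_zero_of_lt hs]
    rw [hstep, Finset.sum_range_succ, Finset.sum_range_succ' _ m, Finset.sum_range_succ' _ m]
    simp only [Nat.sub_self, if_true, zero_mul, mul_zero, add_zero, Nat.choose_zero_right,
      ← add_assoc, ← Finset.sum_add_distrib]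
    congr 1
    refine Finset.sum_congr rfl fun s hs => ?_
    have hs : m - s ≠ 0 := by have := Finset.mem_range.1 hs; omega
    rw [if_neg hs, Nat.choose_succ_succ, Nat.add_sub_add_right, Nat.sub_sub]
    push_cast
    ring

/-- for `L = ∑_{i=0}^r q_i(t) θ^{r-i}` and its formal `θ`-derivatives
`L^{(s)} = ∑_{i=0}^{r-s} q_i(t) (r-i)(r-i-1)⋯(r-i-s+1) θ^{r-i-s}` (zero for `s > r`),
one has `L((log t)^m/m! · f) = ∑_{s=0}^m (log t)^{m-s}/(m-s)! · (1/s!) · (L^{(s)} f)`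
for every `t > 0`, whenever `f` is (at least) `r` times differentiable on `(0,∞)`. -/
theorem stmt_3 (r m : ℕ) (hr : 1 ≤ r) (q : ℕ → ℝ → ℂ) (f : ℝ → ℂ)
    (hf : ∀ k < r, DifferentiableOn ℝ (deriv^[k] f) (Set.Ioi 0)) :
    ∀ t : ℝ, 0 < t →
      (∑ i ∈ Finset.range (r + 1),
          q i t * theta^[r - i] (fun s : ℝ => ((Real.log s ^ m / m.factorial : ℝ) : ℂ) * f s) t)
        = ∑ s ∈ Finset.range (m + 1),
            ((Real.log t ^ (m - s) / (m - s).factorial : ℝ) : ℂ) * (1 / (s.factorial : ℂ)) *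
              (∑ i ∈ Finset.range (r - s + 1),
                q i t * ((r - i).descFactorial s : ℂ) * theta^[r - i - s] f t) := by
  intro t ht
  have hL : ∀ i, theta^[r - i]
      (fun s : ℝ => ((Real.log s ^ m / m.factorial : ℝ) : ℂ) * f s) t =
        ∑ s ∈ Finset.range (m + 1),
          ((r - i).choose s : ℂ) * (logDividedPow (m - s) t * theta^[r - i - s] f t) :=
    fun i => iterate_theta_logDividedPow_mul m hf (r - i) (Nat.sub_le r i) t ht
  simp only [hL, Finset.mul_sum]
  rw [Finset.sum_comm]
  refine Finset.sum_congr rfl fun s _ => ?_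
  rw [← Finset.sum_subset (Finset.range_mono (show r - s + 1 ≤ r + 1 by omega))]
  · refine Finset.sum_congr rfl fun i _ => ?_
    have hs : (s.factorial : ℂ) ≠ 0 := by exact_mod_cast s.factorial_ne_zero
    rw [Nat.descFactorial_eq_factorial_mul_choose, logDividedPow]
    push_cast
    field_simp
  · intro i hi hi'
    rw [Finset.mem_range] at hi hi'
    rw [Nat.choose_eq_zero_of_lt (by omega)]
    simp
end

section
/- (Key Lemma, limit formula.) Let r ≥ 1, 0 < ρ ≤ 1, Δ = {t ∈ ℂ : |t| < ρ}, and H = {z ∈ ℂ : Im z > (1/2π)·log(1/ρ)}, e(z) := exp(2πi z). Let u₀, …, u_{r−1} : Δ → ℂ and v₀, …, v_{r−1} : Δ → ℂ all be holomorphic on Δ (in particular each v_j is analytic at t = 0), define u(z) = Σ_{k=0}^{r−1} u_k(e(z))·z^k on H, let γ, N and π_z be as follows: (γw)(z) = w(z+1), N u = Σ_{h=1}^{r−1} ((−1)^{h−1}/h)(γ−I)^h u, and π_z(w) = Σ_{j=0}^{r−1} (v_j(e(z))/(2πi)^j)·w^{(j)}(z). Then the function z ↦ Σ_{h=0}^{r−1}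 ((−z)^h/h!)·π_z(N^h u) converges, as Im z → +∞, to the limit Σ_{j=0}^{r−1} v_j(0)·u_j(0)·j!/(2πi)^j. -/
/-- The universal covering map `e(z) = exp(2πi z)` of the punctured disc. -/
noncomputable def ee (z : ℂ) : ℂ := Complex.exp (2 * Real.pi * Complex.I * z)

/-- The translation-minus-identity operator `(γ - I)w : z ↦ w(z+1) - w(z)`. -/
noncomputable def Tshift (w : ℂ → ℂ) : ℂ → ℂ := fun z => w (z + 1) - w z

/-- `N = log γ = ∑_{h=1}^{r-1} ((-1)^{h-1}/h)(γ - I)^h`, the logarithm of the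
monodromy (a finite sum on functions killed by `(γ - I)^r`). -/
noncomputable def Nlog (r : ℕ) (w : ℂ → ℂ) : ℂ → ℂ :=
  fun z => ∑ h ∈ Finset.Icc 1 (r - 1), ((-1 : ℂ) ^ (h - 1) / h) * Tshift^[h] w z

/-- The linear functional `π_z` with symbol `∑_j v_j(t) θ^j`:
`π_z(w) = ∑_{j=0}^{r-1} (v_j(e(z))/(2πi)^j)·w^{(j)}(z)`. -/
noncomputable def piFun (r : ℕ) (vc : ℕ → ℂ → ℂ) (z : ℂ) (w : ℂ → ℂ) : ℂ :=
  ∑ j ∈ Finset.range r, vc j (ee z) / (2 * Real.pi * Complex.I) ^ j * iteratedDeriv j w z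

open Polynomial in
/-- The value at `0` of the derivative of a falling factorial of positive degree. -/
theorem derivative_descPochhammer_succ_eval_zero (n : ℕ) :
    (derivative (descPochhammer ℂ (n + 1))).eval 0 = (-1) ^ n * (n.factorial : ℂ) := by
  have key : ∀ m : ℕ, (descPochhammer ℂ m).eval (-1) = (-1) ^ m * (m.factorial : ℂ) := by
    intro m
    induction m with
    | zero => simp
    | succ m ih =>
      rw [descPochhammer_succ_eval, ih, Nat.factorial_succ]
      push_cast
      ring
  rw [descPochhammer_succ_left]
  simp [derivative_mul, key]

open Polynomial in
/-- Newton's forward difference formula for a polynomial, as an identity of polynomials. -/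
theorem taylor_eq_sum_fwdDiff_descPochhammer {r : ℕ} (P : ℂ[X]) (hP : P.natDegree < r) (z : ℂ) :
    taylor z P = ∑ h ∈ Finset.range r,
      C ((fwdDiff 1)^[h] P.eval z / (h.factorial : ℂ)) * descPochhammer ℂ h := by
  apply eq_of_infinite_eval_eq
  refine (Set.infinite_range_of_injective (Nat.cast_injective (R := ℂ))).mono ?_
  rintro _ ⟨n, rfl⟩
  have hn := shift_eq_sum_fwdDiff_iter (h := (1 : ℂ)) P.eval n z
  have hext : ∀ a b : ℕ, (∀ k, a ≤ k → n.choose k • (fwdDiff 1)^[k] P.eval z = 0) → a ≤ b →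
      ∑ k ∈ Finset.range a, n.choose k • (fwdDiff 1)^[k] P.eval z =
      ∑ k ∈ Finset.range b, n.choose k • (fwdDiff 1)^[k] P.eval z := by
    intro a b h hab
    refine Finset.sum_subset (Finset.range_mono hab) fun k _ hk => h k (by simpa using hk)
  have h1 := hext (n + 1) (max (n + 1) r)
    (fun k hk => by rw [Nat.choose_eq_zero_of_lt (by lia), zero_smul]) (le_max_left _ _)
  have h2 := hext r (max (n + 1) r)
    (fun k hk => by
      rw [fwdDiff_iter_eq_zero_of_degree_lt (by lia), Pi.zero_apply, smul_zero])
    (le_max_right _ _)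
  rw [Set.mem_ofPred_eq, taylor_eval, add_comm, ← nsmul_one n, hn, h1, ← h2, eval_finsetSum]
  refine Finset.sum_congr rfl fun k _ => ?_
  rw [eval_mul, eval_C, nsmul_one, descPochhammer_eval_eq_descFactorial,
    Nat.descFactorial_eq_factorial_mul_choose, nsmul_eq_mul, Nat.cast_mul]
  have : (k.factorial : ℂ) ≠ 0 := by exact_mod_cast k.factorial_ne_zero
  field_simp

open Polynomial in
/-- The truncated logarithm of the unit translation differentiates polynomials of degree `< r`. -/
theorem Nlog_eval {r : ℕ} (P : ℂ[X]) (hP : P.natDegree < r) (z : ℂ) :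
    Nlog r P.eval z = (derivative P).eval z := by
  obtain ⟨s, rfl⟩ : ∃ s, r = s + 1 := ⟨r - 1, by lia⟩
  rw [← taylor_coeff_one, taylor_eq_sum_fwdDiff_descPochhammer P hP z]
  have hcoeff : ∀ Q : ℂ[X], Q.coeff 1 = (derivative Q).eval 0 := fun Q => by
    rw [← taylor_coeff_one, taylor_zero]
  rw [finsetSum_coeff, Finset.sum_range_succ']
  simp only [Nlog, Nat.add_sub_cancel, coeff_C_mul]
  simp only [hcoeff, derivative_descPochhammer_succ_eval_zero]
  rw [← Finset.Ico_add_one_right_eq_Icc, Finset.sum_Ico_eq_sum_range]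
  simp only [Nat.add_sub_cancel, Nat.add_sub_cancel_left, descPochhammer_zero, derivative_one,
    eval_zero, mul_zero, add_zero]
  refine Finset.sum_congr rfl fun k _ => ?_
  rw [add_comm 1 k, Nat.factorial_succ]
  have : (k.factorial : ℂ) ≠ 0 := by exact_mod_cast k.factorial_ne_zero
  have : ((k + 1 : ℕ) : ℂ) ≠ 0 := by exact_mod_cast k.succ_ne_zero
  have hT : Tshift = fwdDiff 1 := rfl
  rw [hT]
  push_cast at *
  field_simp

/-- Iterated differences at `z` only depend on the values at the translates `z + n`. -/
theorem Tshift_iterate_congr {w w' : ℂ → ℂ} {z : ℂ} (h : ∀ n : ℕ, w (z + n) = w' (z + n)) (k : ℕ) :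
    Tshift^[k] w z = Tshift^[k] w' z := by
  change (fwdDiff 1)^[k] w z = (fwdDiff 1)^[k] w' z
  simp only [fwdDiff_iter_eq_sum_shift, nsmul_one, h]

open Polynomial in
/-- `Nlog` acts on polynomials in `z` with `1`-periodic coefficients as formal differentiation. -/
theorem Nlog_iterate_eval {r : ℕ} (P : ℂ → ℂ[X]) (hP : ∀ z, (P z).natDegree < r)
    (hper : ∀ z, P (z + 1) = P z) (h : ℕ) :
    (Nlog r)^[h] (fun z => (P z).eval z) = fun z => (derivative^[h] (P z)).eval z := by
  induction h with
  | zero => rfl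
  | succ h ih =>
    rw [Function.iterate_succ_apply', ih]
    funext z
    have hn : ∀ n : ℕ, P (z + n) = P z := by
      intro n
      induction n with
      | zero => simp
      | succ n ihn => rw [Nat.cast_succ, ← add_assoc, hper, ihn]
    have hdeg : (derivative^[h] (P z)).natDegree < r :=
      (natDegree_iterate_derivative _ _).trans_lt ((Nat.sub_le _ _).trans_lt (hP z))
    rw [Function.iterate_succ_apply', ← Nlog_eval _ hdeg]
    simp only [Nlog]
    refine Finset.sum_congr rfl fun k _ => ?_
    rw [Tshift_iterate_congr (w' := (derivative^[h] (P z)).eval) (fun n => by rw [hn n])]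

open Polynomial in
/-- Taylor's formula for a polynomial of degree `< r`. -/
theorem sum_pow_div_factorial_mul_iterate_derivative_eval {r : ℕ} (P : ℂ[X])
    (hP : P.natDegree < r) (a z : ℂ) :
    ∑ h ∈ Finset.range r, a ^ h / (h.factorial : ℂ) * (derivative^[h] P).eval z =
      P.eval (a + z) := by
  rw [← taylor_eval, eval_eq_sum_range' (n := r) (by rwa [natDegree_taylor])]
  refine Finset.sum_congr rfl fun k _ => ?_
  rw [taylor_coeff, ← factorial_smul_hasseDeriv, LinearMap.smul_apply, eval_smul, nsmul_eq_mul]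
  have : (k.factorial : ℂ) ≠ 0 := by exact_mod_cast k.factorial_ne_zero
  field_simp

theorem ee_add_one (z : ℂ) : ee (z + 1) = ee z := by
  rw [ee, ee, mul_add, mul_one, Complex.exp_add, Complex.exp_two_pi_mul_I, mul_one]

theorem hasDerivAt_ee (z : ℂ) : HasDerivAt ee (2 * Real.pi * Complex.I * ee z) z := by
  have h := ((hasDerivAt_id z).const_mul (2 * Real.pi * Complex.I)).cexp
  rw [mul_one, mul_comm (Complex.exp _)] at h
  exact h

theorem contDiff_ee {n : WithTop ℕ∞} : ContDiff ℂ n ee := by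
  unfold ee
  fun_prop

theorem tendsto_ee : Filter.Tendsto ee (Filter.comap Complex.im Filter.atTop) (nhds 0) := by
  rw [tendsto_zero_iff_norm_tendsto_zero]
  have h : ∀ z, ‖ee z‖ = Real.exp (-(2 * Real.pi * z.im)) := by
    intro z
    simp [ee, Complex.norm_exp]
  simp only [h]
  exact Real.tendsto_exp_neg_atTop_nhds_zero.comp
    ((Filter.tendsto_comap).const_mul_atTop Real.two_pi_pos)

theorem isOpen_ee_preimage_ball (ρ : ℝ) : IsOpen (ee ⁻¹' Metric.ball 0 ρ) :=
  Metric.isOpen_ball.preimage (contDiff_ee (n := 0)).continuous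

/-- The derivatives of `f ∘ e` descend to holomorphic functions on the disc, which vanish at the
origin for positive order of differentiation. -/
theorem exists_iteratedDeriv_comp_ee {ρ : ℝ} {f : ℂ → ℂ}
    (hf : DifferentiableOn ℂ f (Metric.ball 0 ρ)) (m : ℕ) :
    ∃ g : ℂ → ℂ, DifferentiableOn ℂ g (Metric.ball 0 ρ) ∧ (g 0 = if m = 0 then f 0 else 0) ∧
      ∀ z, ee z ∈ Metric.ball (0 : ℂ) ρ → iteratedDeriv m (fun y => f (ee y)) z = g (ee z) := by
  induction m with
  | zero => exact ⟨f, hf, by simp, by simp⟩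
  | succ m ih =>
    obtain ⟨g, hg, -, hgm⟩ := ih
    refine ⟨fun t => 2 * Real.pi * Complex.I * t * deriv g t,
      (by fun_prop : DifferentiableOn ℂ (fun t : ℂ => 2 * Real.pi * Complex.I * t) _).mul
        (hg.deriv Metric.isOpen_ball), by simp, fun z hz => ?_⟩
    have heq : iteratedDeriv m (fun y => f (ee y)) =ᶠ[nhds z] fun y => g (ee y) :=
      Filter.eventually_of_mem ((isOpen_ee_preimage_ball ρ).mem_nhds hz) hgm
    have hgd := (hg.differentiableAt (Metric.isOpen_ball.mem_nhds hz)).hasDerivAt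
    rw [iteratedDeriv_succ, heq.deriv_eq]
    exact (hgd.comp z (hasDerivAt_ee z)).deriv.trans (mul_comm _ _)

theorem tendsto_iteratedDeriv_comp_ee {ρ : ℝ} (hρ : 0 < ρ) {f : ℂ → ℂ}
    (hf : DifferentiableOn ℂ f (Metric.ball 0 ρ)) (m : ℕ) :
    Filter.Tendsto (iteratedDeriv m (fun y => f (ee y))) (Filter.comap Complex.im Filter.atTop)
      (nhds (if m = 0 then f 0 else 0)) := by
  obtain ⟨g, hg, hg0, hgm⟩ := exists_iteratedDeriv_comp_ee hf m
  have hball : Metric.ball (0 : ℂ) ρ ∈ nhds 0 := Metric.ball_mem_nhds 0 hρ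
  have hlim := (hg.differentiableAt hball).continuousAt.tendsto.comp tendsto_ee
  rw [hg0] at hlim
  refine hlim.congr' ?_
  filter_upwards [tendsto_ee hball] with z hz
  exact (hgm z hz).symm

theorem contDiffAt_comp_ee {ρ : ℝ} {f : ℂ → ℂ} (hf : DifferentiableOn ℂ f (Metric.ball 0 ρ))
    {z : ℂ} (hz : ee z ∈ Metric.ball (0 : ℂ) ρ) {n : WithTop ℕ∞} :
    ContDiffAt ℂ n (fun y => f (ee y)) z :=
  ((hf.analyticAt (Metric.isOpen_ball.mem_nhds hz)).contDiffAt).comp z contDiff_ee.contDiffAt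

/-- Removing the monodromy replaces `z ^ k` by `(y - z) ^ k`, so that `π_z` only sees derivatives
of the periodic coefficients. -/
theorem sum_piFun_Nlog_iterate {r : ℕ} (hr : 1 ≤ r) {ρ : ℝ} {uc : ℕ → ℂ → ℂ} (vc : ℕ → ℂ → ℂ)
    (huc : ∀ k < r, DifferentiableOn ℂ (uc k) (Metric.ball (0 : ℂ) ρ))
    {z : ℂ} (hz : ee z ∈ Metric.ball (0 : ℂ) ρ) :
    ∑ h ∈ Finset.range r, (-z) ^ h / h.factorial * piFun r vc z
        ((Nlog r)^[h] (fun y => ∑ k ∈ Finset.range r, uc k (ee y) * y ^ k)) =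
      ∑ j ∈ Finset.range r, vc j (ee z) / (2 * Real.pi * Complex.I) ^ j *
        ∑ k ∈ Finset.range r, ∑ i ∈ Finset.range (j + 1),
          j.choose i * iteratedDeriv i (fun y => uc k (ee y)) z *
            (if j - i = k then (k.factorial : ℂ) else 0) := by
  let P : ℂ → Polynomial ℂ := fun y =>
    ∑ k ∈ Finset.range r, Polynomial.C (uc k (ee y)) * Polynomial.X ^ k
  have hPdeg : ∀ y, (P y).natDegree < r := fun y => by
    refine lt_of_le_of_lt (Polynomial.natDegree_sum_le_of_forall_le _ _ (n := r - 1) fun k hk => ?_)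
      (by lia)
    have := Finset.mem_range.1 hk
    exact (Polynomial.natDegree_C_mul_X_pow_le _ _).trans (by lia)
  have hPper : ∀ y, P (y + 1) = P y := fun y => by simp only [P, ee_add_one]
  have hPeval : ∀ y x, (P y).eval x = ∑ k ∈ Finset.range r, uc k (ee y) * x ^ k := fun y x => by
    simp [P, Polynomial.eval_finsetSum]
  have hsmooth : ∀ (h j : ℕ),
      ContDiffAt ℂ j (fun y => (Polynomial.derivative^[h] (P y)).eval y) z := fun h j => by
    simp only [P, Polynomial.iterate_derivative_sum, Polynomial.iterate_derivative_C_mul,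
      Polynomial.eval_finsetSum, Polynomial.eval_mul, Polynomial.eval_C]
    refine ContDiffAt.sum fun k hk => ?_
    exact (contDiffAt_comp_ee (huc k (Finset.mem_range.1 hk)) hz).mul
      (by simpa only [Polynomial.coe_aeval_eq_eval] using
        (Polynomial.contDiff_aeval (Polynomial.derivative^[h] (Polynomial.X ^ k : Polynomial ℂ))
          (𝕜 := ℂ) j).contDiffAt (x := z))
  simp only [← hPeval, Nlog_iterate_eval P hPdeg hPper, piFun, Finset.mul_sum]
  rw [Finset.sum_comm]
  refine Finset.sum_congr rfl fun j _ => ?_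
  have hLeibniz : ∀ k ∈ Finset.range r, iteratedDeriv j (fun y => uc k (ee y) * (y - z) ^ k) z =
      ∑ i ∈ Finset.range (j + 1), j.choose i * iteratedDeriv i (fun y => uc k (ee y)) z *
        (if j - i = k then (k.factorial : ℂ) else 0) := fun k hk => by
    rw [iteratedDeriv_fun_mul (contDiffAt_comp_ee (huc k (Finset.mem_range.1 hk)) hz)
      (by fun_prop)]
    refine Finset.sum_congr rfl fun i _ => ?_
    rw [iteratedDeriv_comp_sub_const (f := fun y => y ^ k)]
    simp only [sub_self, iteratedDeriv_fun_pow_zero, Nat.cast_ite, Nat.cast_zero]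
  have hsum : ∑ h ∈ Finset.range r, (-z) ^ h / (h.factorial : ℂ) *
      iteratedDeriv j (fun y => (Polynomial.derivative^[h] (P y)).eval y) z =
      ∑ k ∈ Finset.range r, iteratedDeriv j (fun y => uc k (ee y) * (y - z) ^ k) z := by
    simp only [← iteratedDeriv_const_mul_field]
    rw [← iteratedDeriv_fun_sum fun h _ => contDiffAt_const.mul (hsmooth h j),
      ← iteratedDeriv_fun_sum fun k hk =>
        (contDiffAt_comp_ee (huc k (Finset.mem_range.1 hk)) hz).mul (by fun_prop)]
    congr 1
    funext y
    rw [sum_pow_div_factorial_mul_iterate_derivative_eval _ (hPdeg y), hPeval, neg_add_eq_sub]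
  simp only [← Finset.mul_sum]
  rw [← Finset.sum_congr rfl hLeibniz, ← hsum, Finset.mul_sum]
  exact Finset.sum_congr rfl fun h _ => by ring

/-- Key Lemma, limit formula: if all the `v_j` are holomorphic on the
whole disc `Δ` (analytic at `t = 0`), then `∑_{h=0}^{r-1} ((-z)^h/h!)·π_z(N^h u)`
converges, as `Im z → +∞`, to `∑_{j=0}^{r-1} v_j(0)·u_j(0)·j!/(2πi)^j`. -/
theorem stmt_7 (r : ℕ) (hr : 1 ≤ r) (ρ : ℝ) (hρ0 : 0 < ρ) (hρ1 : ρ ≤ 1)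
    (uc vc : ℕ → ℂ → ℂ)
    (huc : ∀ k < r, DifferentiableOn ℂ (uc k) (Metric.ball (0 : ℂ) ρ))
    (hvc : ∀ j < r, DifferentiableOn ℂ (vc j) (Metric.ball (0 : ℂ) ρ))
    (H : Set ℂ) (hH : H = {z : ℂ | (1 / (2 * Real.pi)) * Real.log (1 / ρ) < z.im})
    (u : ℂ → ℂ) (hu : ∀ z : ℂ, u z = ∑ k ∈ Finset.range r, uc k (ee z) * z ^ k) :
    Filter.Tendsto
      (fun z : ℂ =>
        ∑ h ∈ Finset.range r, (-z) ^ h / h.factorial * piFun r vc z ((Nlog r)^[h] u))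
      (Filter.comap Complex.im Filter.atTop)
      (nhds (∑ j ∈ Finset.range r,
        vc j 0 * uc j 0 * j.factorial / (2 * Real.pi * Complex.I) ^ j)) := by
  obtain rfl : u = fun y => ∑ k ∈ Finset.range r, uc k (ee y) * y ^ k := funext hu
  have hball : Metric.ball (0 : ℂ) ρ ∈ nhds 0 := Metric.ball_mem_nhds 0 hρ0
  have hlim : Filter.Tendsto (fun z : ℂ =>
      ∑ j ∈ Finset.range r, vc j (ee z) / (2 * Real.pi * Complex.I) ^ j *
        ∑ k ∈ Finset.range r, ∑ i ∈ Finset.range (j + 1),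
          j.choose i * iteratedDeriv i (fun y => uc k (ee y)) z *
            (if j - i = k then (k.factorial : ℂ) else 0))
      (Filter.comap Complex.im Filter.atTop)
      (nhds (∑ j ∈ Finset.range r, vc j 0 / (2 * Real.pi * Complex.I) ^ j *
        ∑ k ∈ Finset.range r, ∑ i ∈ Finset.range (j + 1),
          j.choose i * (if i = 0 then uc k 0 else 0) *
            (if j - i = k then (k.factorial : ℂ) else 0))) := by
    refine tendsto_finsetSum _ fun j hj => Filter.Tendsto.mul (Filter.Tendsto.div_const ?_ _)
      (tendsto_finsetSum _ fun k hk => tendsto_finsetSum _ fun i _ =>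
        Filter.Tendsto.mul_const _ (Filter.Tendsto.const_mul _
          (tendsto_iteratedDeriv_comp_ee hρ0 (huc k (Finset.mem_range.1 hk)) i)))
    exact ((hvc j (Finset.mem_range.1 hj)).differentiableAt hball).continuousAt.tendsto.comp
      tendsto_ee
  have hval : (∑ j ∈ Finset.range r, vc j 0 / (2 * Real.pi * Complex.I) ^ j *
        ∑ k ∈ Finset.range r, ∑ i ∈ Finset.range (j + 1),
          j.choose i * (if i = 0 then uc k 0 else 0) *
            (if j - i = k then (k.factorial : ℂ) else 0)) =
      ∑ j ∈ Finset.range r, vc j 0 * uc j 0 * j.factorial / (2 * Real.pi * Complex.I) ^ j := by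
    refine Finset.sum_congr rfl fun j hj => ?_
    have hinner : ∀ k, ∑ i ∈ Finset.range (j + 1), (j.choose i : ℂ) *
        (if i = 0 then uc k 0 else 0) * (if j - i = k then (k.factorial : ℂ) else 0) =
        if j = k then uc k 0 * k.factorial else 0 := fun k => by
      rw [Finset.sum_eq_single 0 (fun i _ hi => by simp [hi]) (by simp)]
      simp
    simp only [hinner]
    rw [Finset.sum_ite_eq, if_pos hj]
    ring
  rw [hval] at hlim
  refine hlim.congr' ?_
  filter_upwards [tendsto_ee hball] with z hz
  exact (sum_piFun_Nlog_iterate hr vc huc hz).symm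
end

section
/- For every real t with 0 < t < 1, the improper integral ∫_{1}^{∞} dx/√(x(x−1)(x−t)) converges and equals π·Σ_{n=0}^{∞} ((1/2)_n / n!)²·tⁿ, i.e. the elliptic period integral of the Legendre family y² = x(x−1)(x−t) over the cycle [1, ∞) equals π·₂F₁(1/2, 1/2, 1; t). -/
/-- `a_n = ((1/2)_n / n!)²`, where `(1/2)_n` is the Pochhammer symbol. -/
noncomputable def aCoef (n : ℕ) : ℝ :=
  ((ascPochhammer ℝ n).eval (1 / 2) / n.factorial) ^ 2

open Real Set MeasureTheory

/-- The normalised Pochhammer symbol is a generalised binomial coefficient. -/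
theorem eval_ascPochhammer_div_factorial (a : ℝ) (n : ℕ) :
    (ascPochhammer ℝ n).eval a / n.factorial = Ring.choose (a + n - 1) n := by
  rw [← Ring.multichoose_eq, div_eq_iff (by positivity), mul_comm, ← nsmul_eq_mul,
    Ring.factorial_nsmul_multichoose_eq_ascPochhammer, Polynomial.ascPochhammer_smeval_eq_eval]

theorem eval_ascPochhammer_half_div_factorial_eq_prod (n : ℕ) :
    (ascPochhammer ℝ n).eval (1 / 2) / n.factorial =
      ∏ i ∈ Finset.range n, (2 * (i : ℝ) + 1) / (2 * i + 2) := by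
  induction n with
  | zero => simp
  | succ n ih =>
    rw [Finset.prod_range_succ, ← ih, ascPochhammer_succ_eval, Nat.factorial_succ]
    push_cast
    field_simp
    ring

theorem hasSum_one_div_sqrt_one_sub {x : ℝ} (hx : |x| < 1) :
    HasSum (fun n : ℕ => (ascPochhammer ℝ n).eval (1 / 2) / n.factorial * x ^ n)
      (1 / √(1 - x)) := by
  have h := (one_div_one_sub_rpow_hasFPowerSeriesOnBall_zero (1 / 2)).hasSum
    (y := x) (by simpa [enorm_eq_nnnorm, ← NNReal.coe_lt_coe] using hx)
  simpa only [FormalMultilinearSeries.ofScalars_apply_eq, smul_eq_mul, zero_add,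
    ← eval_ascPochhammer_div_factorial, ← sqrt_eq_rpow] using h

theorem two_mul_integral_cos_pow_even (n : ℕ) :
    2 * ∫ θ in (0 : ℝ)..π / 2, cos θ ^ (2 * n) =
      π * ((ascPochhammer ℝ n).eval (1 / 2) / n.factorial) := by
  rw [EulerSine.integral_cos_pow_eq, integral_sin_pow_even,
    eval_ascPochhammer_half_div_factorial_eq_prod]
  ring

theorem abs_mul_cos_sq_lt_one {t : ℝ} (ht : |t| < 1) (θ : ℝ) : |t * cos θ ^ 2| < 1 := by
  rw [abs_mul, abs_of_nonneg (sq_nonneg (cos θ))]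
  nlinarith [abs_nonneg t, cos_sq_le_one θ]

theorem continuous_two_div_sqrt_one_sub_mul_cos_sq {t : ℝ} (ht : |t| < 1) :
    Continuous fun θ : ℝ => 2 * (1 / √(1 - t * cos θ ^ 2)) := by
  refine continuous_const.mul (continuous_const.div (by fun_prop) fun θ => ?_)
  exact (sqrt_pos.2 (sub_pos.2 (lt_of_abs_lt (abs_mul_cos_sq_lt_one ht θ)))).ne'

/-- The power series of the complete elliptic integral of the first kind. -/
theorem hasSum_integral_two_div_sqrt_one_sub_mul_cos_sq {t : ℝ} (ht : |t| < 1) :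
    HasSum (fun n : ℕ => π * (aCoef n * t ^ n))
      (∫ θ in (0 : ℝ)..π / 2, 2 * (1 / √(1 - t * cos θ ^ 2))) := by
  have hsum : Summable fun n : ℕ =>
      ‖2 * ((ascPochhammer ℝ n).eval (1 / 2) / n.factorial * t ^ n)‖ :=
    ((hasSum_one_div_sqrt_one_sub ht).summable.mul_left 2).norm
  have h := intervalIntegral.hasSum_integral_of_dominated_convergence (μ := volume)
    (a := 0) (b := π / 2) (f := fun θ => 2 * (1 / √(1 - t * cos θ ^ 2)))
    (F := fun (n : ℕ) θ =>
      2 * ((ascPochhammer ℝ n).eval (1 / 2) / n.factorial * (t * cos θ ^ 2) ^ n))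
    (fun n _ => ‖2 * ((ascPochhammer ℝ n).eval (1 / 2) / n.factorial * t ^ n)‖)
    (fun n => Continuous.aestronglyMeasurable (by fun_prop))
    (fun n => .of_forall fun θ _ => ?_) (.of_forall fun _ _ => hsum)
    intervalIntegrable_const
    (.of_forall fun θ _ => (hasSum_one_div_sqrt_one_sub (abs_mul_cos_sq_lt_one ht θ)).mul_left 2)
  · refine h.congr_fun fun n => ?_
    have e (θ : ℝ) : 2 * ((ascPochhammer ℝ n).eval (1 / 2) / n.factorial * (t * cos θ ^ 2) ^ n) =
        (ascPochhammer ℝ n).eval (1 / 2) / n.factorial * t ^ n * 2 * cos θ ^ (2 * n) := by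
      rw [mul_pow, ← pow_mul]; ring
    simp only [e]
    rw [intervalIntegral.integral_const_mul, mul_assoc _ 2, two_mul_integral_cos_pow_even, aCoef]
    ring
  · rw [mul_pow, ← mul_assoc, ← mul_assoc, norm_mul, mul_assoc]
    refine mul_le_of_le_one_right (norm_nonneg _) ?_
    rw [norm_pow, norm_of_nonneg (sq_nonneg _)]
    exact pow_le_one₀ (sq_nonneg _) (cos_sq_le_one θ)

theorem cos_pos_of_mem_Ioo_zero_pi_div_two {θ : ℝ} (hθ : θ ∈ Ioo 0 (π / 2)) : 0 < cos θ :=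
  cos_pos_of_mem_Ioo ⟨by linarith [hθ.1, pi_pos], hθ.2⟩

theorem image_inv_cos_sq_Ioo : (fun θ : ℝ => (cos θ ^ 2)⁻¹) '' Ioo 0 (π / 2) = Ioi 1 := by
  ext x
  constructor
  · rintro ⟨θ, hθ, rfl⟩
    have hc := cos_pos_of_mem_Ioo_zero_pi_div_two hθ
    have hs := sin_pos_of_pos_of_lt_pi hθ.1 (by linarith [hθ.2, pi_pos])
    have h : cos θ ^ 2 < 1 := by nlinarith [sin_sq_add_cos_sq θ]
    exact (one_lt_inv₀ (pow_pos hc 2)).2 h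
  · intro hx
    have hx' : 0 < x - 1 := sub_pos.2 hx
    refine ⟨arctan √(x - 1), ⟨arctan_pos.2 (sqrt_pos.2 hx'), arctan_lt_pi_div_two _⟩, ?_⟩
    simp only [cos_sq_arctan, sq_sqrt hx'.le]
    simp

theorem injOn_inv_cos_sq_Ioo : InjOn (fun θ : ℝ => (cos θ ^ 2)⁻¹) (Ioo 0 (π / 2)) := by
  intro a ha b hb hab
  have h : cos a = cos b :=
    (sq_eq_sq₀ (cos_pos_of_mem_Ioo_zero_pi_div_two ha).le
      (cos_pos_of_mem_Ioo_zero_pi_div_two hb).le).1 (inv_injective hab)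
  exact injOn_cos ⟨ha.1.le, by linarith [ha.2, pi_pos]⟩ ⟨hb.1.le, by linarith [hb.2, pi_pos]⟩ h

theorem hasDerivAt_inv_cos_sq {θ : ℝ} (hθ : cos θ ≠ 0) :
    HasDerivAt (fun θ : ℝ => (cos θ ^ 2)⁻¹) (2 * sin θ / cos θ ^ 3) θ := by
  refine (((hasDerivAt_cos θ).fun_pow 2).fun_inv (pow_ne_zero 2 hθ)).congr_deriv ?_
  simp only [Nat.cast_ofNat, Nat.add_one_sub_one, pow_one]
  field_simp

/-- The integrand of the Legendre period in the coordinate `x = 1 / cos² θ`. -/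
theorem abs_deriv_mul_legendre_integrand {t θ : ℝ} (hθ : θ ∈ Ioo 0 (π / 2)) :
    |2 * sin θ / cos θ ^ 3| •
        (1 / √((cos θ ^ 2)⁻¹ * ((cos θ ^ 2)⁻¹ - 1) * ((cos θ ^ 2)⁻¹ - t))) =
      2 * (1 / √(1 - t * cos θ ^ 2)) := by
  have hc := cos_pos_of_mem_Ioo_zero_pi_div_two hθ
  have hs := sin_pos_of_pos_of_lt_pi hθ.1 (by linarith [hθ.2, pi_pos])
  have h : (cos θ ^ 2)⁻¹ * ((cos θ ^ 2)⁻¹ - 1) * ((cos θ ^ 2)⁻¹ - t) =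
      (sin θ / cos θ ^ 3) ^ 2 * (1 - t * cos θ ^ 2) := by
    rw [div_pow, sin_sq]
    field_simp
  rw [smul_eq_mul, h, sqrt_mul (sq_nonneg _), sqrt_sq (by positivity), abs_of_pos (by positivity)]
  field_simp

/-- for `0 < t < 1` the elliptic integral `∫_1^∞ dx/√(x(x-1)(x-t))`
converges and equals `π·₂F₁(1/2,1/2,1;t) = π·∑ ((1/2)_n/n!)² tⁿ`. -/
theorem stmt_11 (t : ℝ) (ht0 : 0 < t) (ht1 : t < 1) :
    MeasureTheory.IntegrableOn
      (fun x : ℝ => 1 / Real.sqrt (x * (x - 1) * (x - t))) (Set.Ioi 1) ∧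
    (∫ x in Set.Ioi (1 : ℝ), 1 / Real.sqrt (x * (x - 1) * (x - t)))
      = Real.pi * ∑' n : ℕ, aCoef n * t ^ n := by
  have ht : |t| < 1 := by rwa [abs_of_pos ht0]
  have hd : ∀ θ ∈ Ioo 0 (π / 2), HasDerivWithinAt (fun θ : ℝ => (cos θ ^ 2)⁻¹)
      (2 * sin θ / cos θ ^ 3) (Ioo 0 (π / 2)) θ := fun θ hθ =>
    (hasDerivAt_inv_cos_sq (cos_pos_of_mem_Ioo_zero_pi_div_two hθ).ne').hasDerivWithinAt
  rw [← image_inv_cos_sq_Ioo]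
  constructor
  · rw [integrableOn_image_iff_integrableOn_abs_deriv_smul measurableSet_Ioo hd
      injOn_inv_cos_sq_Ioo]
    refine IntegrableOn.congr_fun ?_
      (fun θ hθ => (abs_deriv_mul_legendre_integrand (t := t) hθ).symm) measurableSet_Ioo
    exact (continuous_two_div_sqrt_one_sub_mul_cos_sq ht).continuousOn.integrableOn_Icc.mono_set
      Ioo_subset_Icc_self
  · rw [integral_image_eq_integral_abs_deriv_smul measurableSet_Ioo hd injOn_inv_cos_sq_Ioo,
      setIntegral_congr_fun measurableSet_Ioo
        (fun θ hθ => abs_deriv_mul_legendre_integrand (t := t) hθ),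
      ← integral_Ioc_eq_integral_Ioo, ← intervalIntegral.integral_of_le (by positivity),
      ← (hasSum_integral_two_div_sqrt_one_sub_mul_cos_sq ht).tsum_eq, tsum_mul_left]
end

section
/- (Connection formula at t = 1 for the logarithmic hypergeometric solution.) Let a_n = ((1/2)_n / n!)², h_n = Σ_{k=1}^{n} 1/(k(k−1/2)), φ₀(t) = Σ_{n=0}^{∞} a_n tⁿ, and φ₁(t) = log(t)·φ₀(t) + Σ_{n=1}^{∞} a_n h_n tⁿ. Then for every real t with 0 < t < 1 one has π·φ₀(1−t) = 4·log(2)·φ₀(t) − φ₁(t). -/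
/-- `h_n = ∑_{k=1}^n 1/(k(k-1/2))`. -/
noncomputable def hSum (n : ℕ) : ℝ := ∑ k ∈ Finset.Icc 1 n, 1 / ((k : ℝ) * ((k : ℝ) - 1 / 2))

/-- `φ₀(t) = ∑_{n≥0} a_n tⁿ`. -/
noncomputable def phi0 (t : ℝ) : ℝ := ∑' n : ℕ, aCoef n * t ^ n

/-- `φ₁(t) = log(t)·φ₀(t) + ∑_{n≥1} a_n h_n tⁿ` (note `h₀ = 0`). -/
noncomputable def phi1 (t : ℝ) : ℝ :=
  Real.log t * phi0 t + ∑' n : ℕ, aCoef n * hSum n * t ^ n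

open Filter Topology

/-- The normalized Pochhammer symbol `(1/2)_n / n!`. -/
noncomputable def halfCoef (n : ℕ) : ℝ := (ascPochhammer ℝ n).eval (1 / 2) / n.factorial

theorem aCoef_eq_halfCoef_sq (n : ℕ) : aCoef n = halfCoef n ^ 2 := rfl

theorem halfCoef_zero : halfCoef 0 = 1 := by simp [halfCoef]

theorem halfCoef_succ (n : ℕ) :
    halfCoef (n + 1) = halfCoef n * ((2 * n + 1) / (2 * n + 2)) := by
  have : (n.factorial : ℝ) ≠ 0 := by exact_mod_cast n.factorial_ne_zero
  simp only [halfCoef, ascPochhammer_succ_eval, Nat.factorial_succ, Nat.cast_mul, Nat.cast_add,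
    Nat.cast_one]
  field_simp
  ring

theorem halfCoef_nonneg (n : ℕ) : 0 ≤ halfCoef n := by
  induction n with
  | zero => simp [halfCoef_zero]
  | succ n ih => rw [halfCoef_succ]; positivity

theorem halfCoef_le_one (n : ℕ) : halfCoef n ≤ 1 := by
  induction n with
  | zero => simp [halfCoef_zero]
  | succ n ih =>
    rw [halfCoef_succ]
    refine mul_le_one₀ ih (by positivity) ?_
    rw [div_le_one (by positivity)]
    linarith

theorem halfCoef_eq_prod (n : ℕ) :
    halfCoef n = ∏ i ∈ Finset.range n, (2 * (i : ℝ) + 1) / (2 * i + 2) := by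
  induction n with
  | zero => simp [halfCoef_zero]
  | succ n ih => rw [halfCoef_succ, ih, Finset.prod_range_succ]

theorem aCoef_succ (n : ℕ) :
    ((n : ℝ) + 1) ^ 2 * aCoef (n + 1) = ((n : ℝ) + 1 / 2) ^ 2 * aCoef n := by
  simp only [aCoef_eq_halfCoef_sq, halfCoef_succ]
  field_simp

theorem aCoef_nonneg (n : ℕ) : 0 ≤ aCoef n := sq_nonneg _

theorem aCoef_zero : aCoef 0 = 1 := by simp [aCoef_eq_halfCoef_sq, halfCoef_zero]

theorem aCoef_le_one (n : ℕ) : aCoef n ≤ 1 :=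
  pow_le_one₀ (halfCoef_nonneg n) (halfCoef_le_one n)

theorem hSum_succ (n : ℕ) :
    hSum (n + 1) = hSum n + 1 / (((n : ℝ) + 1) * ((n : ℝ) + 1 / 2)) := by
  rw [hSum, Finset.sum_Icc_succ_top (by omega), ← hSum]
  push_cast
  ring_nf

theorem hSum_zero : hSum 0 = 0 := by simp [hSum]

theorem hSum_nonneg (n : ℕ) : 0 ≤ hSum n := by
  induction n with
  | zero => simp [hSum_zero]
  | succ n ih => rw [hSum_succ]; positivity

theorem hSum_le (n : ℕ) : hSum n ≤ 2 * n := by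
  induction n with
  | zero => simp [hSum_zero]
  | succ n ih =>
    rw [hSum_succ]
    have : 1 / (((n : ℝ) + 1) * ((n : ℝ) + 1 / 2)) ≤ 2 := by
      rw [div_le_iff₀ (by positivity)]
      nlinarith [Nat.cast_nonneg (α := ℝ) n]
    push_cast
    linarith

/-- A real sequence of at most polynomial growth. -/
def PolyBounded (c : ℕ → ℝ) : Prop := ∃ (M : ℝ) (k : ℕ), ∀ n, |c n| ≤ M * ((n : ℝ) + 1) ^ k

theorem polyBounded_aCoef : PolyBounded aCoef :=
  ⟨1, 0, fun n => by simpa [abs_of_nonneg (aCoef_nonneg n)] using aCoef_le_one n⟩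

theorem polyBounded_aCoef_mul_hSum : PolyBounded fun n => aCoef n * hSum n := by
  refine ⟨2, 1, fun n => ?_⟩
  rw [abs_of_nonneg (mul_nonneg (aCoef_nonneg n) (hSum_nonneg n))]
  nlinarith [aCoef_nonneg n, aCoef_le_one n, hSum_nonneg n, hSum_le n]

theorem PolyBounded.natCast_mul {c : ℕ → ℝ} (hc : PolyBounded c) :
    PolyBounded fun n => n * c n := by
  obtain ⟨M, k, h⟩ := hc
  refine ⟨M, k + 1, fun n => ?_⟩
  rw [abs_mul, Nat.abs_cast, pow_succ', mul_left_comm]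
  exact mul_le_mul (by linarith) (h n) (abs_nonneg _) (by positivity)

theorem summable_succ_pow_mul_geometric (k : ℕ) {r : ℝ} (hr0 : 0 < r) (hr1 : r < 1) :
    Summable fun n : ℕ => ((n : ℝ) + 1) ^ k * r ^ n := by
  have h := (summable_nat_add_iff 1).2 (summable_pow_mul_geometric_of_norm_lt_one (R := ℝ) k
    (by rwa [Real.norm_of_nonneg hr0.le]))
  refine (h.mul_right r⁻¹).congr fun n => ?_
  push_cast
  rw [pow_succ]
  field_simp

theorem PolyBounded.summable {c : ℕ → ℝ} (hc : PolyBounded c) {t : ℝ} (ht : |t| < 1) :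
    Summable fun n => c n * t ^ n := by
  obtain ⟨M, k, h⟩ := hc
  obtain ⟨r, hr, hr1⟩ := exists_between ht
  have hr0 : 0 < r := (abs_nonneg t).trans_lt hr
  refine .of_norm_bounded ((summable_succ_pow_mul_geometric k hr0 hr1).mul_left M) fun n => ?_
  rw [norm_mul, norm_pow, Real.norm_eq_abs, Real.norm_eq_abs, ← mul_assoc]
  exact mul_le_mul (h n) (pow_le_pow_left₀ (abs_nonneg t) hr.le n) (by positivity)
    ((abs_nonneg _).trans (h n))

theorem PolyBounded.hasDerivAt_tsum {c : ℕ → ℝ} (hc : PolyBounded c) {t : ℝ} (ht : |t| < 1) :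
    HasDerivAt (fun x => ∑' n, c n * x ^ n) (∑' n, c n * (n * t ^ (n - 1))) t := by
  obtain ⟨M, k, h⟩ := hc.natCast_mul
  obtain ⟨r, hr, hr1⟩ := exists_between ht
  have hr0 : 0 < r := (abs_nonneg t).trans_lt hr
  have hball : ∀ y, y ∈ Metric.ball (0 : ℝ) r ↔ |y| < r := fun y => by simp
  refine hasDerivAt_tsum_of_isPreconnected (t := Metric.ball (0 : ℝ) r)
    (u := fun n : ℕ => M * (((n : ℝ) + 1) ^ k * r ^ n) * r⁻¹)
    (((summable_succ_pow_mul_geometric k hr0 hr1).mul_left M).mul_right r⁻¹) Metric.isOpen_ball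
    (convex_ball 0 r).isPreconnected (fun n y _ => (hasDerivAt_pow n y).const_mul (c n))
    (fun n y hy => ?_) ((hball t).2 hr) (hc.summable ht) ((hball t).2 hr)
  rw [hball] at hy
  have hM : 0 ≤ M * ((n : ℝ) + 1) ^ k := (abs_nonneg _).trans (h n)
  cases n with
  | zero =>
    rw [← mul_assoc]
    simpa using mul_nonneg (mul_nonneg hM (pow_nonneg hr0.le 0)) (inv_nonneg.2 hr0.le)
  | succ n =>
    rw [show c (n + 1) * (((n + 1 : ℕ) : ℝ) * y ^ (n + 1 - 1)) =
      ((n + 1 : ℕ) : ℝ) * c (n + 1) * y ^ n by simp; ring, norm_mul, norm_pow, Real.norm_eq_abs,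
      Real.norm_eq_abs]
    calc _ ≤ M * (((n + 1 : ℕ) : ℝ) + 1) ^ k * r ^ n :=
          mul_le_mul (h _) (pow_le_pow_left₀ (abs_nonneg y) hy.le n) (by positivity) hM
      _ = _ := by rw [pow_succ r n]; field_simp

/-- The Euler operator `θ = t d/dt` acts on power series by `c n ↦ n * c n`. -/
theorem PolyBounded.hasDerivAt_tsum_euler {c : ℕ → ℝ} (hc : PolyBounded c) {t : ℝ} (ht0 : 0 < t)
    (ht1 : t < 1) :
    HasDerivAt (fun x => ∑' n, c n * x ^ n) ((∑' n, n * c n * t ^ n) / t) t := by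
  convert hc.hasDerivAt_tsum (abs_lt.2 ⟨by linarith, ht1⟩) using 1
  rw [← tsum_div_const]
  refine tsum_congr fun n => ?_
  cases n with
  | zero => simp
  | succ n =>
    rw [add_tsub_cancel_right, pow_succ]
    field_simp

/-- The operator `(1 - t) θ² - t θ - t / 4` acting on a power series. -/
theorem PolyBounded.hasSum_hypergeometric {c : ℕ → ℝ} (hc : PolyBounded c) {t : ℝ}
    (ht : |t| < 1) :
    HasSum (fun n : ℕ => (((n : ℝ) + 1) ^ 2 * c (n + 1) - ((n : ℝ) + 1 / 2) ^ 2 * c n) * t ^ (n + 1))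
      ((1 - t) * (∑' n, n * (n * c n) * t ^ n) - t * (∑' n, n * c n * t ^ n)
        - t / 4 * ∑' n, c n * t ^ n) := by
  have s0 := (hc.summable ht).hasSum
  have s1 := (hc.natCast_mul.summable ht).hasSum
  have s2 := (hc.natCast_mul.natCast_mul.summable ht).hasSum
  have s3 := (hasSum_nat_add_iff' 1).2 s2
  have s4 := s3.sub (((s2.add s1).add (s0.mul_left (1 / 4))).mul_left t)
  simp only [Finset.range_one, Finset.sum_singleton, Nat.cast_zero, zero_mul, sub_zero] at s4
  have s5 : HasSum (fun n : ℕ =>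
      (((n : ℝ) + 1) ^ 2 * c (n + 1) - ((n : ℝ) + 1 / 2) ^ 2 * c n) * t ^ (n + 1)) _ :=
    s4.congr_fun fun n => by push_cast; ring
  rwa [show ∀ x y z : ℝ, (1 - t) * x - t * y - t / 4 * z = x - t * (x + y + 1 / 4 * z) by
    intros; ring]

theorem tsum_aCoef_hypergeometric {t : ℝ} (ht : |t| < 1) :
    (1 - t) * (∑' n, n * (n * aCoef n) * t ^ n) =
      t * (∑' n, n * aCoef n * t ^ n) + t / 4 * phi0 t := by
  have h := polyBounded_aCoef.hasSum_hypergeometric ht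
  simp only [aCoef_succ, sub_self, zero_mul] at h
  have := h.unique hasSum_zero
  rw [phi0]
  linarith

theorem tsum_aCoef_mul_hSum_hypergeometric {t : ℝ} (ht : |t| < 1) :
    (1 - t) * (∑' n, n * (n * (aCoef n * hSum n)) * t ^ n) =
      t * (∑' n, n * (aCoef n * hSum n) * t ^ n) + t / 4 * (∑' n, aCoef n * hSum n * t ^ n)
        + t * phi0 t - 2 * (1 - t) * ∑' n, n * aCoef n * t ^ n := by
  have h := polyBounded_aCoef_mul_hSum.hasSum_hypergeometric ht
  have s0 := (polyBounded_aCoef.summable ht).hasSum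
  have s1 := (polyBounded_aCoef.natCast_mul.summable ht).hasSum
  have s2 := (hasSum_nat_add_iff' 1).2 s1
  have s3 := (((s1.mul_left 2).add s0).mul_left t).sub (s2.mul_left 2)
  have h' := h.unique (s3.congr_fun ?_)
  · simp only [Finset.range_one, Finset.sum_singleton, Nat.cast_zero, zero_mul, sub_zero] at h'
    rw [phi0]
    linarith
  · intro n
    have h1 : aCoef (n + 1) = ((n : ℝ) + 1 / 2) ^ 2 * aCoef n / ((n : ℝ) + 1) ^ 2 := by
      rw [← aCoef_succ]; field_simp
    rw [hSum_succ, h1]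
    push_cast
    field_simp
    ring

/-- The pair `(y, q)` solves the self-adjoint first order system
`t (1 - t) y' = q`, `q' = y / 4` of the hypergeometric equation on `(0, 1)`. -/
def IsSolution (y q : ℝ → ℝ) : Prop :=
  ∀ t, 0 < t → t < 1 → HasDerivAt y (q t / (t * (1 - t))) t ∧ HasDerivAt q (y t / 4) t

theorem IsSolution.comp_one_sub {y q : ℝ → ℝ} (h : IsSolution y q) :
    IsSolution (fun t => y (1 - t)) fun t => -q (1 - t) := by
  intro t ht0 ht1
  obtain ⟨h1, h2⟩ := h (1 - t) (by linarith) (by linarith)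
  have hs : HasDerivAt (fun t : ℝ => 1 - t) (-1) t := by
    simpa using (hasDerivAt_id t).const_sub 1
  refine ⟨(h1.comp t hs).congr_deriv ?_, (h2.comp t hs).neg.congr_deriv ?_⟩
  · rw [sub_sub_cancel, mul_comm (1 - t) t]
    ring
  · ring

theorem IsSolution.const_mul {y q : ℝ → ℝ} (h : IsSolution y q) (a : ℝ) :
    IsSolution (fun t => a * y t) fun t => a * q t := fun t ht0 ht1 =>
  ⟨((h t ht0 ht1).1.const_mul a).congr_deriv (by ring),
    ((h t ht0 ht1).2.const_mul a).congr_deriv (by ring)⟩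

theorem IsSolution.sub {y q z r : ℝ → ℝ} (h : IsSolution y q) (h' : IsSolution z r) :
    IsSolution (fun t => y t - z t) fun t => q t - r t := fun t ht0 ht1 =>
  ⟨((h t ht0 ht1).1.sub (h' t ht0 ht1).1).congr_deriv (by ring),
    ((h t ht0 ht1).2.sub (h' t ht0 ht1).2).congr_deriv (by ring)⟩

theorem hasDerivAt_one_sub_mul {f : ℝ → ℝ} {f' t : ℝ} (h : HasDerivAt f f' t) :
    HasDerivAt (fun x => (1 - x) * f x) ((1 - t) * f' - f t) t :=
  (((hasDerivAt_id t).const_sub 1).mul h).congr_deriv (by simp; ring)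

theorem isSolution_phi0 :
    IsSolution phi0 fun t => (1 - t) * ∑' n, n * aCoef n * t ^ n := by
  intro t ht0 ht1
  have ht : |t| < 1 := abs_lt.2 ⟨by linarith, ht1⟩
  have h1 : 1 - t ≠ 0 := by linarith
  refine ⟨(polyBounded_aCoef.hasDerivAt_tsum_euler ht0 ht1).congr_deriv ?_,
    (hasDerivAt_one_sub_mul
      (polyBounded_aCoef.natCast_mul.hasDerivAt_tsum_euler ht0 ht1)).congr_deriv ?_⟩
  · field_simp
  · have := tsum_aCoef_hypergeometric ht
    rw [← mul_div_assoc, this]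
    field_simp
    ring

theorem isSolution_phi1 :
    IsSolution phi1 fun t => (1 - t) * (phi0 t + Real.log t * (∑' n, n * aCoef n * t ^ n)
      + ∑' n, n * (aCoef n * hSum n) * t ^ n) := by
  intro t ht0 ht1
  have ht : |t| < 1 := abs_lt.2 ⟨by linarith, ht1⟩
  have h1 : 1 - t ≠ 0 := by linarith
  have hlog := Real.hasDerivAt_log ht0.ne'
  have d0 : HasDerivAt phi0 ((∑' n, n * aCoef n * t ^ n) / t) t :=
    polyBounded_aCoef.hasDerivAt_tsum_euler ht0 ht1
  have d1 := polyBounded_aCoef.natCast_mul.hasDerivAt_tsum_euler ht0 ht1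
  have e0 := polyBounded_aCoef_mul_hSum.hasDerivAt_tsum_euler ht0 ht1
  have e1 := polyBounded_aCoef_mul_hSum.natCast_mul.hasDerivAt_tsum_euler ht0 ht1
  refine ⟨((hlog.mul d0).add e0).congr_deriv ?_,
    (hasDerivAt_one_sub_mul ((d0.add (hlog.mul d1)).add e1)).congr_deriv ?_⟩
  · field_simp
  · have ha := tsum_aCoef_hypergeometric ht
    have hb := tsum_aCoef_mul_hSum_hypergeometric ht
    rw [phi1]
    simp only [Pi.add_apply, Pi.mul_apply]
    generalize (∑' n, n * (n * aCoef n) * t ^ n) = A₂ at ha ⊢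
    generalize (∑' n, n * (n * (aCoef n * hSum n)) * t ^ n) = B₂ at hb ⊢
    generalize (∑' n, n * aCoef n * t ^ n) = A₁ at ha hb ⊢
    generalize (∑' n, n * (aCoef n * hSum n) * t ^ n) = B₁ at hb ⊢
    field_simp
    linear_combination (4 * Real.log t) * ha + 4 * hb

/-- The Wronskian of two solutions is constant on `(0, 1)`. -/
theorem IsSolution.wronskian_eq {y q z r : ℝ → ℝ} (h : IsSolution y q) (h' : IsSolution z r)
    {s t : ℝ} (hs : s ∈ Set.Ioo (0 : ℝ) 1) (ht : t ∈ Set.Ioo (0 : ℝ) 1) :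
    y s * r s - z s * q s = y t * r t - z t * q t := by
  have hd : ∀ x ∈ Set.Ioo (0 : ℝ) 1, HasDerivAt (fun x => y x * r x - z x * q x) 0 x := by
    intro x hx
    obtain ⟨h1, h2⟩ := h x hx.1 hx.2
    obtain ⟨h1', h2'⟩ := h' x hx.1 hx.2
    exact ((h1.mul h2').sub (h1'.mul h2)).congr_deriv (by ring)
  exact isOpen_Ioo.is_const_of_deriv_eq_zero isPreconnected_Ioo
    (fun x hx => (hd x hx).differentiableAt.differentiableWithinAt)
    (fun x hx => (hd x hx).deriv) hs ht

theorem hasSum_halfCoef {x : ℝ} (hx : |x| < 1) :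
    HasSum (fun n => halfCoef n * x ^ n) (1 / √(1 - x)) := by
  have h := (Real.one_div_one_sub_rpow_hasFPowerSeriesOnBall_zero (1 / 2)).hasSum (y := x)
    (by simpa [enorm_eq_nnnorm, ← NNReal.coe_lt_coe] using hx)
  rw [zero_add, ← Real.sqrt_eq_rpow] at h
  refine h.congr_fun fun n => ?_
  have hn : (n.factorial : ℝ) ≠ 0 := by exact_mod_cast n.factorial_ne_zero
  have hc := Ring.factorial_nsmul_multichoose_eq_ascPochhammer (1 / 2 : ℝ) n
  rw [Ring.multichoose_eq, nsmul_eq_mul, Polynomial.ascPochhammer_smeval_eq_eval] at hc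
  rw [FormalMultilinearSeries.ofScalars_apply_eq, smul_eq_mul, halfCoef, ← hc]
  field_simp

theorem integral_sin_pow_two_mul (n : ℕ) :
    ∫ θ in 0..Real.pi, Real.sin θ ^ (2 * n) = Real.pi * halfCoef n := by
  rw [integral_sin_pow_even, halfCoef_eq_prod]

theorem pi_mul_phi0_eq_integral {x : ℝ} (hx0 : 0 ≤ x) (hx1 : x < 1) :
    Real.pi * phi0 x = ∫ θ in 0..Real.pi, 1 / √(1 - x * Real.sin θ ^ 2) := by
  have hgeo := summable_geometric_of_lt_one hx0 hx1
  have h : HasSum (fun n : ℕ => ∫ θ in 0..Real.pi, halfCoef n * (x * Real.sin θ ^ 2) ^ n)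
      (∫ θ in 0..Real.pi, 1 / √(1 - x * Real.sin θ ^ 2)) := by
    refine intervalIntegral.hasSum_integral_of_dominated_convergence (fun n _ => x ^ n)
      (fun n => ?_) (fun n => .of_forall fun θ _ => ?_) (.of_forall fun θ _ => hgeo)
      intervalIntegrable_const (.of_forall fun θ _ => hasSum_halfCoef ?_)
    · exact Continuous.aestronglyMeasurable (by fun_prop)
    · rw [norm_mul, Real.norm_of_nonneg (halfCoef_nonneg n), Real.norm_of_nonneg (by positivity)]
      calc _ ≤ 1 * (x * 1) ^ n := by
            gcongr
            · exact halfCoef_le_one n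
            · exact Real.sin_sq_le_one θ
        _ = x ^ n := by simp
    · rw [abs_of_nonneg (by positivity)]
      nlinarith [Real.sin_sq_le_one θ]
  rw [← h.tsum_eq, phi0, ← tsum_mul_left]
  refine tsum_congr fun n => ?_
  simp_rw [mul_pow, ← pow_mul, ← mul_assoc]
  rw [intervalIntegral.integral_const_mul, integral_sin_pow_two_mul, aCoef_eq_halfCoef_sq]
  ring

theorem one_sub_mul_sin_sq_pos {t : ℝ} (ht0 : 0 < t) (ht1 : t < 1) (θ : ℝ) :
    0 < 1 - (1 - t) * Real.sin θ ^ 2 := by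
  nlinarith [Real.sin_sq_le_one θ, sq_nonneg (Real.sin θ)]

theorem integral_sin_div_sqrt {t : ℝ} (ht0 : 0 < t) (ht1 : t < 1) :
    ∫ θ in 0..Real.pi, Real.sin θ / √(1 - (1 - t) * Real.sin θ ^ 2) =
      2 * Real.log (1 + √(1 - t)) / √(1 - t) - Real.log t / √(1 - t) := by
  have h1 : 0 < √(1 - t) := Real.sqrt_pos.2 (by linarith)
  have h2 : 0 < √t := Real.sqrt_pos.2 ht0
  have e1 : √(1 - t) ^ 2 = 1 - t := Real.sq_sqrt (by linarith)
  have e2 : √t ^ 2 = t := Real.sq_sqrt ht0.le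
  have hd : ∀ θ ∈ Set.uIcc 0 Real.pi,
      HasDerivAt (fun θ => -(Real.arsinh (√(1 - t) / √t * Real.cos θ) / √(1 - t)))
        (Real.sin θ / √(1 - (1 - t) * Real.sin θ ^ 2)) θ := by
    intro θ _
    have h3 := one_sub_mul_sin_sq_pos ht0 ht1 θ
    have h := ((((Real.hasDerivAt_cos θ).const_mul (√(1 - t) / √t)).arsinh).div_const
      √(1 - t)).neg
    refine h.congr_deriv ?_
    have e3 : √(1 + (√(1 - t) / √t * Real.cos θ) ^ 2) =
        √(1 - (1 - t) * Real.sin θ ^ 2) / √t := by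
      rw [← Real.sqrt_div h3.le]
      congr 1
      rw [mul_pow, div_pow, e1, e2, Real.cos_sq']
      field_simp
      ring
    rw [e3]
    have := Real.sqrt_pos.2 h3
    simp only [smul_eq_mul]
    field_simp
  rw [intervalIntegral.integral_eq_sub_of_hasDerivAt hd]
  · have e4 : Real.arsinh (√(1 - t) / √t) = Real.log (1 + √(1 - t)) - Real.log t / 2 := by
      have : √(1 + (√(1 - t) / √t) ^ 2) = 1 / √t := by
        rw [div_pow, e1, e2, ← Real.sqrt_one, ← Real.sqrt_div zero_le_one, Real.sqrt_one]
        congr 1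
        field_simp
        ring
      rw [Real.arsinh, this, ← add_div, Real.log_div (by positivity) h2.ne', Real.log_sqrt ht0.le,
        add_comm]
    simp only [Real.cos_pi, Real.cos_zero, mul_neg, mul_one, Real.arsinh_neg, e4]
    ring
  · refine Continuous.intervalIntegrable ?_ _ _
    exact Real.continuous_sin.div (by fun_prop) fun θ =>
      (Real.sqrt_pos.2 (one_sub_mul_sin_sq_pos ht0 ht1 θ)).ne'

theorem one_sub_sin_div_abs_cos (θ : ℝ) (h : 0 ≤ Real.sin θ) :
    (1 - Real.sin θ) / |Real.cos θ| = |Real.cos θ| / (1 + Real.sin θ) := by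
  rcases eq_or_ne (Real.cos θ) 0 with h0 | h0
  · simp [h0]
  · have := abs_pos.2 h0
    rw [div_eq_div_iff this.ne' (by positivity), ← sq, sq_abs, Real.cos_sq']
    ring

theorem integral_abs_cos_div_one_add_sin :
    ∫ θ in 0..Real.pi, |Real.cos θ| / (1 + Real.sin θ) = 2 * Real.log 2 := by
  have hpi := Real.pi_pos
  have hpos : ∀ θ ∈ Set.Icc 0 Real.pi, 0 < 1 + Real.sin θ := fun θ hθ => by
    linarith [Real.sin_nonneg_of_mem_Icc hθ]
  have hcont : ContinuousOn (fun θ => |Real.cos θ| / (1 + Real.sin θ)) (Set.Icc 0 Real.pi) :=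
    ContinuousOn.div (by fun_prop) (by fun_prop) fun θ hθ => (hpos θ hθ).ne'
  have hcont' : ContinuousOn (fun θ => Real.cos θ / (1 + Real.sin θ)) (Set.Icc 0 Real.pi) :=
    ContinuousOn.div (by fun_prop) (by fun_prop) fun θ hθ => (hpos θ hθ).ne'
  have s1 : Set.uIcc 0 (Real.pi / 2) ⊆ Set.Icc 0 Real.pi := by
    rw [Set.uIcc_of_le (by linarith)]; exact Set.Icc_subset_Icc le_rfl (by linarith)
  have s2 : Set.uIcc (Real.pi / 2) Real.pi ⊆ Set.Icc 0 Real.pi := by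
    rw [Set.uIcc_of_le (by linarith)]; exact Set.Icc_subset_Icc (by linarith) le_rfl
  have hd : ∀ θ ∈ Set.Icc 0 Real.pi, HasDerivAt (fun θ => Real.log (1 + Real.sin θ))
      (Real.cos θ / (1 + Real.sin θ)) θ := fun θ hθ =>
    ((Real.hasDerivAt_sin θ).const_add 1).log (hpos θ hθ).ne'
  rw [← intervalIntegral.integral_add_adjacent_intervals (b := Real.pi / 2)
    (hcont.mono s1).intervalIntegrable (hcont.mono s2).intervalIntegrable]
  have i1 : ∫ θ in 0..Real.pi / 2, |Real.cos θ| / (1 + Real.sin θ) = Real.log 2 := by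
    rw [intervalIntegral.integral_congr (g := fun θ => Real.cos θ / (1 + Real.sin θ)),
      intervalIntegral.integral_eq_sub_of_hasDerivAt (fun θ hθ => hd θ (s1 hθ))
        (hcont'.mono s1).intervalIntegrable]
    · norm_num
    · intro θ hθ
      rw [Set.uIcc_of_le (by linarith)] at hθ
      simp only
      rw [abs_of_nonneg (Real.cos_nonneg_of_mem_Icc ⟨by linarith [hθ.1], hθ.2⟩)]
  have i2 : ∫ θ in Real.pi / 2..Real.pi, |Real.cos θ| / (1 + Real.sin θ) = Real.log 2 := by
    rw [intervalIntegral.integral_congr (g := fun θ => -(Real.cos θ / (1 + Real.sin θ))),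
      intervalIntegral.integral_neg,
      intervalIntegral.integral_eq_sub_of_hasDerivAt (fun θ hθ => hd θ (s2 hθ))
        (hcont'.mono s2).intervalIntegrable]
    · norm_num
    · intro θ hθ
      rw [Set.uIcc_of_le (by linarith)] at hθ
      simp only
      rw [abs_of_nonpos (Real.cos_nonpos_of_pi_div_two_le_of_le hθ.1 (by linarith [hθ.2])), neg_div]
  rw [i1, i2]
  ring

theorem tendsto_integral_one_sub_sin_div_sqrt :
    Tendsto (fun t : ℝ => ∫ θ in 0..Real.pi, (1 - Real.sin θ) / √(1 - (1 - t) * Real.sin θ ^ 2))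
      (𝓝[>] 0) (𝓝 (2 * Real.log 2)) := by
  have hsin : ∀ θ ∈ Set.uIoc 0 Real.pi, 0 ≤ Real.sin θ := fun θ hθ => by
    rw [Set.uIoc_of_le Real.pi_pos.le] at hθ
    exact Real.sin_nonneg_of_mem_Icc ⟨hθ.1.le, hθ.2⟩
  have hmem : ∀ᶠ t : ℝ in 𝓝[>] 0, t ∈ Set.Ioo (0 : ℝ) 1 := Ioo_mem_nhdsGT one_pos
  rw [← integral_abs_cos_div_one_add_sin]
  refine intervalIntegral.tendsto_integral_filter_of_dominated_convergence (fun _ => 1) ?_ ?_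
    intervalIntegrable_const (.of_forall fun θ hθ => ?_)
  · filter_upwards [hmem] with t ht
    refine (Continuous.div (by fun_prop) (by fun_prop) fun θ => ?_).aestronglyMeasurable
    exact (Real.sqrt_pos.2 (one_sub_mul_sin_sq_pos ht.1 ht.2 θ)).ne'
  · filter_upwards [hmem] with t ht
    refine .of_forall fun θ hθ => ?_
    have h0 := hsin θ hθ
    have h1 := Real.sin_le_one θ
    have hp := Real.sqrt_pos.2 (one_sub_mul_sin_sq_pos ht.1 ht.2 θ)
    rw [Real.norm_of_nonneg (div_nonneg (by linarith) hp.le), div_le_one hp]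
    refine Real.le_sqrt_of_sq_le ?_
    nlinarith [mul_nonneg ht.1.le (sq_nonneg (Real.sin θ)), mul_nonneg h0 (sub_nonneg.2 h1)]
  · rw [← one_sub_sin_div_abs_cos θ (hsin θ hθ)]
    rcases eq_or_ne (Real.cos θ) 0 with h0 | h0
    · have h1 : Real.sin θ = 1 := by
        nlinarith [Real.sin_sq_add_cos_sq θ, hsin θ hθ]
      simp [h1]
    · refine Tendsto.div tendsto_const_nhds ?_ (abs_pos.2 h0).ne'
      have hc : Continuous fun t : ℝ => √(1 - (1 - t) * Real.sin θ ^ 2) := by fun_prop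
      convert (hc.tendsto 0).mono_left nhdsWithin_le_nhds using 2
      rw [← Real.sqrt_sq_eq_abs, Real.cos_sq', sub_zero, one_mul]

/-- The logarithmic asymptotics of `φ₀` at the singular point `1`. -/
theorem tendsto_pi_mul_phi0_one_sub_add_log :
    Tendsto (fun t => Real.pi * phi0 (1 - t) + Real.log t) (𝓝[>] 0) (𝓝 (4 * Real.log 2)) := by
  have hcs : Continuous fun t : ℝ => √(1 - t) := by fun_prop
  have hs : Tendsto (fun t : ℝ => √(1 - t)) (𝓝[>] 0) (𝓝 1) := by
    simpa using (hcs.tendsto 0).mono_left nhdsWithin_le_nhds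
  have h1 : Tendsto (fun t : ℝ => 2 * Real.log (1 + √(1 - t)) / √(1 - t)) (𝓝[>] 0)
      (𝓝 (2 * Real.log 2)) := by
    have := (((hs.const_add 1).log (by norm_num)).const_mul 2).div hs one_ne_zero
    rwa [one_add_one_eq_two, div_one] at this
  have h2 : Tendsto (fun t : ℝ => Real.log t * t / (√(1 - t) * (1 + √(1 - t)))) (𝓝[>] 0)
      (𝓝 0) := by
    have hl : Tendsto (fun t : ℝ => Real.log t * t) (𝓝[>] 0) (𝓝 0) := by
      simpa using tendsto_log_mul_rpow_nhdsGT_zero one_pos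
    have := hl.div (hs.mul (hs.const_add 1)) (by norm_num)
    rwa [zero_div] at this
  have h3 := (tendsto_integral_one_sub_sin_div_sqrt.add h1).sub h2
  rw [show 2 * Real.log 2 + 2 * Real.log 2 - 0 = 4 * Real.log 2 by ring] at h3
  refine h3.congr' ?_
  filter_upwards [Ioo_mem_nhdsGT one_pos] with t ht
  obtain ⟨ht0, ht1⟩ := ht
  have hint : ∀ f : ℝ → ℝ, Continuous f → IntervalIntegrable
      (fun θ => f θ / √(1 - (1 - t) * Real.sin θ ^ 2)) MeasureTheory.volume 0 Real.pi :=
    fun f hf => (hf.div (by fun_prop) fun θ =>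
      (Real.sqrt_pos.2 (one_sub_mul_sin_sq_pos ht0 ht1 θ)).ne').intervalIntegrable _ _
  have hsplit : Real.pi * phi0 (1 - t) =
      (∫ θ in 0..Real.pi, (1 - Real.sin θ) / √(1 - (1 - t) * Real.sin θ ^ 2)) +
        ∫ θ in 0..Real.pi, Real.sin θ / √(1 - (1 - t) * Real.sin θ ^ 2) := by
    rw [pi_mul_phi0_eq_integral (by linarith) (by linarith),
      ← intervalIntegral.integral_add (hint _ (by fun_prop)) (hint _ (by fun_prop))]
    refine intervalIntegral.integral_congr fun θ _ => ?_
    rw [← add_div, sub_add_cancel]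
  have hs0 : 0 < √(1 - t) := Real.sqrt_pos.2 (by linarith)
  have hs2 : √(1 - t) ^ 2 = 1 - t := Real.sq_sqrt (by linarith)
  rw [hsplit, integral_sin_div_sqrt ht0 ht1]
  generalize √(1 - t) = s at *
  have ht : t = 1 - s ^ 2 := by linarith
  have key : Real.log t * t / (s * (1 + s)) = Real.log t / s - Real.log t := by
    rw [mul_div_assoc, show t / (s * (1 + s)) = 1 / s - 1 by rw [ht]; field_simp; ring]
    ring
  rw [key]
  ring

theorem one_le_phi0 {t : ℝ} (ht0 : 0 ≤ t) (ht1 : t < 1) : 1 ≤ phi0 t := by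
  have h := (polyBounded_aCoef.summable (abs_lt.2 ⟨by linarith, ht1⟩)).le_tsum 0
    fun n _ => mul_nonneg (aCoef_nonneg n) (pow_nonneg ht0 n)
  rwa [aCoef_zero, pow_zero, mul_one] at h

theorem phi0_le_inv {t : ℝ} (ht0 : 0 ≤ t) (ht1 : t < 1) : phi0 t ≤ (1 - t)⁻¹ := by
  rw [← tsum_geometric_of_lt_one ht0 ht1]
  exact (polyBounded_aCoef.summable (abs_lt.2 ⟨by linarith, ht1⟩)).tsum_le_tsum
    (fun n => mul_le_of_le_one_left (pow_nonneg ht0 n) (aCoef_le_one n))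
    (summable_geometric_of_lt_one ht0 ht1)

/-- A solution that vanishes in the limit at the singular point `0` is zero. -/
theorem IsSolution.eq_zero_of_tendsto {y q : ℝ → ℝ} (h : IsSolution y q)
    (hy : Tendsto y (𝓝[>] 0) (𝓝 0)) {t : ℝ} (ht0 : 0 < t) (ht1 : t < 1) : y t = 0 := by
  set p : ℝ → ℝ := fun t => (1 - t) * ∑' n, n * aCoef n * t ^ n
  set C := phi0 t * q t - y t * p t
  have hpos : ∀ x ∈ Set.Ioo (0 : ℝ) 1, 0 < phi0 x := fun x hx =>
    one_pos.trans_le (one_le_phi0 hx.1.le hx.2)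
  have hF : ∀ x ∈ Set.Ioo (0 : ℝ) 1,
      HasDerivAt (fun x => y x / phi0 x) (C / (x * (1 - x) * phi0 x ^ 2)) x := by
    intro x hx
    have hC : phi0 x * q x - y x * p x = C := isSolution_phi0.wronskian_eq h hx ⟨ht0, ht1⟩
    refine ((h x hx.1 hx.2).1.div (isSolution_phi0 x hx.1 hx.2).1 (hpos x hx).ne').congr_deriv ?_
    have h0 := hx.1.ne'
    have h1 : 1 - x ≠ 0 := by linarith [hx.2]
    have h2 := (hpos x hx).ne'
    rw [← hC]
    field_simp
    ring
  have hF0 : Tendsto (fun x => y x / phi0 x) (𝓝[>] 0) (𝓝 0) := by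
    refine squeeze_zero_norm' ?_ (tendsto_zero_iff_norm_tendsto_zero.1 hy)
    filter_upwards [Ioo_mem_nhdsGT one_pos] with x hx
    rw [norm_div, Real.norm_of_nonneg (hpos x hx).le]
    exact div_le_self (norm_nonneg _) (one_le_phi0 hx.1.le hx.2)
  have hdbl : Tendsto (fun x : ℝ => 2 * x) (𝓝[>] 0) (𝓝[>] 0) := by
    refine tendsto_nhdsWithin_iff.2 ⟨?_, ?_⟩
    · have hc : Continuous fun x : ℝ => 2 * x := by fun_prop
      simpa using (hc.tendsto 0).mono_left nhdsWithin_le_nhds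
    · filter_upwards [self_mem_nhdsWithin] with x hx
      exact mul_pos two_pos (Set.mem_Ioi.1 hx)
  have hC0 : |C| ≤ 0 := by
    have hlim := (((hF0.comp hdbl).sub hF0).abs).const_mul 8
    simp only [sub_zero, abs_zero, mul_zero] at hlim
    refine ge_of_tendsto hlim ?_
    filter_upwards [Ioo_mem_nhdsGT (show (0 : ℝ) < 1 / 4 by norm_num)] with s hs
    obtain ⟨hs0, hs1⟩ := hs
    obtain ⟨x, hx, hx'⟩ := exists_hasDerivAt_eq_slope (fun x => y x / phi0 x) _
      (show s < 2 * s by linarith)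
      (fun x hx => (hF x ⟨by linarith [hx.1], by linarith [hx.2]⟩).continuousAt.continuousWithinAt)
      (fun x hx => hF x ⟨by linarith [hx.1], by linarith [hx.2]⟩)
    have hx0 : 0 < x := hs0.trans hx.1
    have hx1 : x < 1 / 2 := by linarith [hx.2]
    have hφ := hpos x ⟨hx0, by linarith⟩
    have hφ2 : phi0 x ≤ 2 := (phi0_le_inv hx0.le (by linarith)).trans
      (by rw [inv_le_comm₀ (by linarith) two_pos]; linarith)
    have hden : 0 < x * (1 - x) * phi0 x ^ 2 := mul_pos (mul_pos hx0 (by linarith)) (by positivity)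
    have hbound : x * (1 - x) * phi0 x ^ 2 ≤ 8 * s := by
      calc _ ≤ (2 * s) * 1 * 2 ^ 2 := by
            gcongr
            · linarith
            · exact hx.2.le
            · linarith
        _ = 8 * s := by ring
    rw [show 2 * s - s = s by ring, div_eq_div_iff hden.ne' hs0.ne'] at hx'
    have habs := congrArg abs hx'
    rw [abs_mul, abs_mul, abs_of_pos hs0, abs_of_pos hden] at habs
    have : |C| * s ≤ |y (2 * s) / phi0 (2 * s) - y s / phi0 s| * (8 * s) :=
      habs.trans_le (mul_le_mul_of_nonneg_left hbound (abs_nonneg _))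
    simp only [Function.comp_apply]
    nlinarith
  have hC : C = 0 := abs_nonpos_iff.1 hC0
  have hconst : ∀ x ∈ Set.Ioo (0 : ℝ) 1, y t / phi0 t = y x / phi0 x := fun x hx =>
    isOpen_Ioo.is_const_of_deriv_eq_zero (f := fun x => y x / phi0 x) isPreconnected_Ioo
      (fun x hx => (hF x hx).differentiableAt.differentiableWithinAt)
      (fun x hx => by rw [(hF x hx).deriv, hC, zero_div]; rfl) ⟨ht0, ht1⟩ hx
  have hlim : Tendsto (fun x => y x / phi0 x) (𝓝[>] 0) (𝓝 (y t / phi0 t)) := by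
    refine tendsto_const_nhds.congr' ?_
    filter_upwards [Ioo_mem_nhdsGT one_pos] with x hx using hconst x hx
  have := tendsto_nhds_unique hlim hF0
  exact (div_eq_zero_iff.1 this).resolve_right (hpos t ⟨ht0, ht1⟩).ne'

theorem phi0_zero : phi0 0 = 1 := by
  rw [phi0, tsum_eq_single 0 fun n hn => by simp [hn]]
  simp [aCoef_zero]

theorem tendsto_phi1_sub_log : Tendsto (fun t => phi1 t - Real.log t) (𝓝[>] 0) (𝓝 0) := by
  have hφ : HasDerivAt phi0 _ 0 := polyBounded_aCoef.hasDerivAt_tsum (by simp)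
  have hS := (polyBounded_aCoef_mul_hSum.hasDerivAt_tsum (t := 0)
    (by simp)).continuousAt.tendsto.mono_left (nhdsWithin_le_nhds (s := Set.Ioi 0))
  rw [tsum_eq_single 0 fun n hn => by simp [hn], hSum_zero, mul_zero, zero_mul] at hS
  have hslope := (hasDerivAt_iff_tendsto_slope.1 hφ).mono_left
    (nhdsWithin_mono 0 fun x (hx : 0 < x) => hx.ne')
  have hl : Tendsto (fun t : ℝ => Real.log t * t) (𝓝[>] 0) (𝓝 0) := by
    simpa using tendsto_log_mul_rpow_nhdsGT_zero one_pos
  have hlim := (hl.mul hslope).add hS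
  rw [zero_mul, add_zero] at hlim
  refine hlim.congr' ?_
  filter_upwards [self_mem_nhdsWithin] with t ht
  have ht' : t ≠ 0 := (Set.mem_Ioi.1 ht).ne'
  rw [phi1, slope_def_field, phi0_zero, sub_zero]
  field_simp
  ring

theorem tendsto_phi0_zero : Tendsto phi0 (𝓝[>] 0) (𝓝 1) := by
  have hφ : HasDerivAt phi0 _ 0 := polyBounded_aCoef.hasDerivAt_tsum (by simp)
  rw [← phi0_zero]
  exact hφ.continuousAt.tendsto.mono_left nhdsWithin_le_nhds

/-- connection formula at `t = 1`:
`π·φ₀(1-t) = 4·log(2)·φ₀(t) - φ₁(t)` for `0 < t < 1`. -/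
theorem stmt_13 (t : ℝ) (ht0 : 0 < t) (ht1 : t < 1) :
    Real.pi * phi0 (1 - t) = 4 * Real.log 2 * phi0 t - phi1 t := by
  have hsol := (isSolution_phi0.comp_one_sub.const_mul Real.pi).sub
    ((isSolution_phi0.const_mul (4 * Real.log 2)).sub isSolution_phi1)
  have hlim := (tendsto_pi_mul_phi0_one_sub_add_log.sub
    (tendsto_phi0_zero.const_mul (4 * Real.log 2))).add tendsto_phi1_sub_log
  rw [mul_one, sub_self, add_zero] at hlim
  exact sub_eq_zero.1
    (hsol.eq_zero_of_tendsto (hlim.congr fun s => by ring) ht0 ht1)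
end

section
/- The limit lim_{ε → 0⁺} ( Γ(1−ε)·Γ(ε)/Γ(1/2)² + Γ(1−ε)·Γ(−ε)/Γ(1/2−ε)² ) exists and equals 4·log(2)/π, where Γ is the real Gamma function and log is the natural logarithm. -/
open Real in
/-- The derivative at `0` of `ε` times the combination
`Γ(1-ε)Γ(ε)/Γ(1/2)² + Γ(1-ε)Γ(-ε)/Γ(1/2-ε)²`, in the form regular at `0`. -/
lemma hasDerivAt_Gamma_combination :
    HasDerivAt (fun ε : ℝ => Gamma (1 - ε) *
      (Gamma (1 + ε) / Gamma (1 / 2) ^ 2 - Gamma (1 - ε) / Gamma (1 / 2 - ε) ^ 2))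
      (4 * log 2 / π) 0 := by
  have one_sub : HasDerivAt (fun ε : ℝ => Gamma (1 - ε)) eulerMascheroniConstant 0 := by
    have h : HasDerivAt Gamma (-eulerMascheroniConstant) (1 - 0) := by
      simpa using hasDerivAt_Gamma_one
    simpa using h.comp_const_sub 1 0
  have one_add : HasDerivAt (fun ε : ℝ => Gamma (1 + ε)) (-eulerMascheroniConstant) 0 :=
    HasDerivAt.comp_const_add 1 0 (by simpa using hasDerivAt_Gamma_one)
  have half_sub : HasDerivAt (fun ε : ℝ => Gamma (1 / 2 - ε))
      (√π * (eulerMascheroniConstant + 2 * log 2)) 0 := by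
    have h : HasDerivAt Gamma (-√π * (eulerMascheroniConstant + 2 * log 2)) (1 / 2 - 0) := by
      simpa using hasDerivAt_Gamma_one_half
    simpa using h.comp_const_sub (1 / 2) 0
  have sqrt_pi_ne : √π ≠ 0 := (sqrt_pos.2 pi_pos).ne'
  have sq_sqrt_pi : √π ^ 2 = π := sq_sqrt pi_pos.le
  refine (one_sub.fun_mul ((one_add.div_const _).fun_sub
    (one_sub.fun_div (half_sub.fun_pow 2) ?_))).congr_deriv ?_
  · rw [sub_zero, Gamma_one_half_eq]
    positivity
  · simp only [sub_zero, add_zero, Gamma_one, Gamma_one_half_eq]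
    rw [← sq_sqrt_pi]
    simp only [sqrt_sq (sqrt_nonneg π)]
    field_simp
    ring

/-- `lim_{ε→0⁺} ( Γ(1-ε)Γ(ε)/Γ(1/2)² + Γ(1-ε)Γ(-ε)/Γ(1/2-ε)² ) = 4·log(2)/π`. -/
theorem stmt_15 :
    Filter.Tendsto
      (fun ε : ℝ =>
        Real.Gamma (1 - ε) * Real.Gamma ε / (Real.Gamma (1 / 2)) ^ 2 +
          Real.Gamma (1 - ε) * Real.Gamma (-ε) / (Real.Gamma (1 / 2 - ε)) ^ 2)
      (nhdsWithin 0 (Set.Ioi 0)) (nhds (4 * Real.log 2 / Real.pi)) := by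
  refine hasDerivAt_Gamma_combination.tendsto_slope_zero_right.congr' ?_
  filter_upwards [self_mem_nhdsWithin] with ε hε
  have ε_ne : ε ≠ 0 := ne_of_gt hε
  have gamma_add : Real.Gamma (1 + ε) = ε * Real.Gamma ε := by
    rw [add_comm, Real.Gamma_add_one ε_ne]
  have gamma_sub : Real.Gamma (1 - ε) = -ε * Real.Gamma (-ε) := by
    rw [← Real.Gamma_add_one (neg_ne_zero.2 ε_ne), neg_add_eq_sub]
  simp only [zero_add, sub_zero, add_zero, sub_self, mul_zero, smul_eq_mul, gamma_add]
  nth_rewrite 2 [gamma_sub]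
  field_simp
  ring
end

section
/- For every real t > 0 and every natural number n, the limit as ε → 0 (ε real, ε ≠ 0, ε → 0) of (1/ε)·( t^ε·(1/2)_n² / (1+ε)_n − (1/2−ε)_n² / (1−ε)_n ) exists and equals ((1/2)_n² / n!)·( log(t) + Σ_{k=1}^{n} 1/(k(k−1/2)) ), where (x)_n = x(x+1)⋯(x+n−1) denotes the Pochhammer symbol (for real x) and t^ε = exp(ε·log t). -/
/-- The logarithmic derivative of `x ↦ (x)_n` at a positive point is `∑ k < n, 1 / (x + k)`. -/
theorem hasDerivAt_eval_ascPochhammer {x : ℝ} (hx : 0 < x) (n : ℕ) :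
    HasDerivAt (fun y : ℝ => (ascPochhammer ℝ n).eval y)
      ((ascPochhammer ℝ n).eval x * ∑ k ∈ Finset.range n, 1 / (x + k)) x := by
  induction n with
  | zero => simpa using hasDerivAt_const x (1 : ℝ)
  | succ n ih =>
    have hxn : x + n ≠ 0 := by positivity
    simp only [ascPochhammer_succ_eval]
    refine (ih.mul ((hasDerivAt_id x).add_const (n : ℝ))).congr_deriv ?_
    rw [Finset.sum_range_succ]
    simp only [id]
    field_simp

theorem sum_Icc_one_div_mul_sub_half (n : ℕ) :
    ∑ k ∈ Finset.Icc 1 n, 1 / ((k : ℝ) * ((k : ℝ) - 1 / 2)) =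
      2 * ∑ k ∈ Finset.range n, 1 / (1 / 2 + (k : ℝ)) -
        2 * ∑ k ∈ Finset.range n, 1 / (1 + (k : ℝ)) := by
  induction n with
  | zero => simp
  | succ n ih =>
    rw [Finset.sum_Icc_succ_top (by omega), ih, Finset.sum_range_succ, Finset.sum_range_succ]
    have half_ne : (1 / 2 + n : ℝ) ≠ 0 := by positivity
    have one_ne : (1 + n : ℝ) ≠ 0 := by positivity
    have key : 1 / (((n + 1 : ℕ) : ℝ) * (((n + 1 : ℕ) : ℝ) - 1 / 2)) =
        2 * (1 / (1 / 2 + (n : ℝ))) - 2 * (1 / (1 + (n : ℝ))) := by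
      have cast_eq : ((n + 1 : ℕ) : ℝ) = 1 + n := by push_cast; ring
      have sub_eq : (1 + n : ℝ) - 1 / 2 = 1 / 2 + n := by ring
      rw [cast_eq, sub_eq, mul_one_div, mul_one_div, div_sub_div _ _ half_ne one_ne,
        mul_comm (1 + n : ℝ)]
      congr 1
      ring
    rw [key]
    ring

/-- for `t > 0` and `n : ℕ`,
`lim_{ε→0, ε≠0} (1/ε)·( t^ε·(1/2)_n²/(1+ε)_n − (1/2−ε)_n²/(1−ε)_n )
  = ((1/2)_n²/n!)·( log t + ∑_{k=1}^n 1/(k(k−1/2)) )`. -/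
theorem stmt_16 (t : ℝ) (ht : 0 < t) (n : ℕ) :
    Filter.Tendsto
      (fun ε : ℝ =>
        (1 / ε) *
          (t ^ ε * ((ascPochhammer ℝ n).eval (1 / 2)) ^ 2 /
              (ascPochhammer ℝ n).eval (1 + ε) -
            ((ascPochhammer ℝ n).eval (1 / 2 - ε)) ^ 2 /
              (ascPochhammer ℝ n).eval (1 - ε)))
      (nhdsWithin 0 {(0 : ℝ)}ᶜ)
      (nhds (((ascPochhammer ℝ n).eval (1 / 2)) ^ 2 / n.factorial *
        (Real.log t + ∑ k ∈ Finset.Icc 1 n, 1 / ((k : ℝ) * ((k : ℝ) - 1 / 2))))) := by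
  have half_deriv : HasDerivAt (fun ε : ℝ => (ascPochhammer ℝ n).eval (1 / 2 - ε)) _ 0 :=
    HasDerivAt.comp_const_sub (1 / 2) 0
      (hasDerivAt_eval_ascPochhammer (x := 1 / 2 - 0) (by norm_num) n)
  have one_sub_deriv : HasDerivAt (fun ε : ℝ => (ascPochhammer ℝ n).eval (1 - ε)) _ 0 :=
    HasDerivAt.comp_const_sub 1 0
      (hasDerivAt_eval_ascPochhammer (x := 1 - 0) (by norm_num) n)
  have one_add_deriv : HasDerivAt (fun ε : ℝ => (ascPochhammer ℝ n).eval (1 + ε)) _ 0 :=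
    HasDerivAt.comp_const_add 1 0
      (hasDerivAt_eval_ascPochhammer (x := 1 + 0) (by norm_num) n)
  have rpow_deriv : HasDerivAt (fun ε : ℝ => t ^ ε) _ 0 :=
    (Real.hasStrictDerivAt_const_rpow ht 0).hasDerivAt
  have eval_one : (ascPochhammer ℝ n).eval 1 = n.factorial := ascPochhammer_eval_one ℝ n
  have factorial_ne : (n.factorial : ℝ) ≠ 0 := by positivity
  have diff_deriv := ((rpow_deriv.mul_const (((ascPochhammer ℝ n).eval (1 / 2)) ^ 2)).div
    one_add_deriv (by simp [eval_one, factorial_ne])).sub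
      ((half_deriv.pow 2).div one_sub_deriv (by simp [eval_one, factorial_ne]))
  convert diff_deriv.tendsto_slope using 1
  · funext ε
    simp [slope_def_field, eval_one]
    ring
  · rw [sum_Icc_one_div_mul_sub_half]
    simp only [sub_zero, add_zero, eval_one, Real.rpow_zero, Pi.pow_apply]
    congr 1
    field_simp
    ring
end

section
/- One has the series identity π = Σ_{n=0}^{∞} ((1/2)_n / n!)² · ( Σ_{k=n+1}^{∞} 1/(k(k−1/2)) ), where (1/2)_n = Π_{j=0}^{n−1}(1/2 + j) is the Pochhammer symbol; in particular the double series on the right converges. -/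
/-- The tail `∑_{k=n+1}^∞ 1/(k(k-1/2))`, written as a sum over `k : ℕ` shifted by `n+1`. -/
noncomputable def tailSum (n : ℕ) : ℝ :=
  ∑' k : ℕ, 1 / (((k : ℝ) + n + 1) * ((k : ℝ) + n + 1 - 1 / 2))

open MeasureTheory Set Real

/-- The coefficients `(1/2)_n / n!` of the binomial series of `1 / √(1 - x)`. -/
noncomputable def invSqrtCoef (n : ℕ) : ℝ :=
  (ascPochhammer ℝ n).eval (1 / 2) / n.factorial

lemma invSqrtCoef_nonneg (n : ℕ) : 0 ≤ invSqrtCoef n :=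
  div_nonneg (ascPochhammer_pos n _ (by norm_num)).le (Nat.cast_nonneg _)

lemma invSqrtCoef_eq_prod (n : ℕ) :
    invSqrtCoef n = ∏ i ∈ Finset.range n, (2 * (i : ℝ) + 1) / (2 * i + 2) := by
  induction n with
  | zero => simp [invSqrtCoef]
  | succ n ih =>
    rw [Finset.prod_range_succ, ← ih, invSqrtCoef, invSqrtCoef, ascPochhammer_succ_eval,
      Nat.factorial_succ]
    push_cast
    field_simp
    ring

lemma hasSum_invSqrtCoef {x : ℝ} (h0 : 0 ≤ x) (h1 : x < 1) :
    HasSum (fun n ↦ invSqrtCoef n * x ^ n) (1 / √(1 - x)) := by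
  have h := (Real.one_div_one_sub_rpow_hasFPowerSeriesOnBall_zero (1 / 2)).hasSum (y := x)
    (by simpa [enorm_eq_ofReal h0] using h1)
  rw [zero_add, ← Real.sqrt_eq_rpow] at h
  refine h.congr_fun fun n ↦ ?_
  rw [FormalMultilinearSeries.ofScalars_apply_eq, smul_eq_mul, ← Ring.multichoose_eq]
  congr 1
  rw [invSqrtCoef, div_eq_iff (by positivity), mul_comm, ← nsmul_eq_mul,
    Ring.factorial_nsmul_multichoose_eq_ascPochhammer, Polynomial.ascPochhammer_smeval_eq_eval]

/-- The fundamental theorem of calculus for a nonnegative derivative, as a Lebesgue integral. -/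
lemma lintegral_Ioo_ofReal_deriv {F f : ℝ → ℝ} {a b : ℝ} (hab : a ≤ b)
    (hF : ContinuousOn F (Icc a b)) (hderiv : ∀ x ∈ Ioo a b, HasDerivAt F (f x) x)
    (hf : ∀ x ∈ Ioo a b, 0 ≤ f x) :
    ∫⁻ x in Ioo a b, ENNReal.ofReal (f x) = ENNReal.ofReal (F b - F a) := by
  have hint := intervalIntegral.integrableOn_deriv_of_nonneg hF hderiv hf
  rw [← intervalIntegral.integral_eq_sub_of_hasDerivAt_of_le hab hF hderiv
    ((intervalIntegrable_iff_integrableOn_Ioc_of_le hab).2 hint),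
    intervalIntegral.integral_of_le hab, integral_Ioc_eq_integral_Ioo,
    ofReal_integral_eq_lintegral_ofReal (hint.mono_set Ioo_subset_Ioc_self)]
  exact (ae_restrict_iff' measurableSet_Ioo).2 (.of_forall hf)

lemma lintegral_cos_pow_even (n : ℕ) :
    ∫⁻ φ in Ioo 0 (π / 2), ENNReal.ofReal (cos φ ^ (2 * n)) =
      ENNReal.ofReal (π / 2 * invSqrtCoef n) := by
  have hpi : (0 : ℝ) ≤ π / 2 := by positivity
  have h : ∫ φ in Ioo 0 (π / 2), cos φ ^ (2 * n) = π / 2 * invSqrtCoef n := by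
    rw [← integral_Ioc_eq_integral_Ioo, ← intervalIntegral.integral_of_le hpi,
      EulerSine.integral_cos_pow_eq, integral_sin_pow_even, invSqrtCoef_eq_prod]
    ring
  rw [← h, ofReal_integral_eq_lintegral_ofReal]
  · exact (Continuous.integrableOn_Icc (by fun_prop)).mono_set Ioo_subset_Icc_self
  · exact .of_forall fun φ ↦ (even_two_mul n).pow_nonneg _

lemma tailSum_term_nonneg (n k : ℕ) :
    0 ≤ 1 / (((k : ℝ) + n + 1) * ((k : ℝ) + n + 1 - 1 / 2)) := by
  have : (0 : ℝ) < k + n + 1 - 1 / 2 := by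
    have : (0 : ℝ) ≤ k + n := by positivity
    linarith
  positivity

lemma summable_tailSum (n : ℕ) :
    Summable (fun k : ℕ => 1 / (((k : ℝ) + n + 1) * ((k : ℝ) + n + 1 - 1 / 2))) := by
  have h : Summable (fun k : ℕ ↦ 2 * (1 / ((k + 1 : ℕ) : ℝ) ^ 2)) :=
    ((summable_nat_add_iff 1).2 (Real.summable_one_div_nat_pow.2 one_lt_two)).mul_left 2
  refine h.of_nonneg_of_le (tailSum_term_nonneg n) fun k ↦ ?_
  have hk : (0 : ℝ) ≤ k := by positivity
  have hn : (0 : ℝ) ≤ n := by positivity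
  rw [mul_one_div, div_le_div_iff₀ (mul_pos (by linarith) (by linarith)) (by positivity)]
  push_cast
  nlinarith [mul_nonneg hk hn]

lemma lintegral_pow_even_mul_one_sub (m : ℕ) :
    ∫⁻ s in Ioo (0 : ℝ) 1, ENNReal.ofReal (4 * s ^ (2 * m) * (1 - s)) =
      ENNReal.ofReal (1 / (((m : ℝ) + 1) * ((m : ℝ) + 1 - 1 / 2))) := by
  rw [lintegral_Ioo_ofReal_deriv
    (F := fun s ↦ 4 * (s ^ (2 * m + 1) / (2 * m + 1) - s ^ (2 * m + 2) / (2 * m + 2)))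
    zero_le_one (by fun_prop)]
  · congr 1
    have h3 : (m : ℝ) + 1 - 1 / 2 = (2 * m + 1) / 2 := by ring
    simp only [one_pow, zero_pow (Nat.succ_ne_zero _), h3]
    field_simp
    ring
  · intro s _
    have h1 := (hasDerivAt_pow (2 * m + 1) s).div_const (2 * (m : ℝ) + 1)
    have h2 := (hasDerivAt_pow (2 * m + 2) s).div_const (2 * (m : ℝ) + 2)
    refine ((h1.sub h2).const_mul 4).congr_deriv ?_
    push_cast
    field_simp
    ring
  · intro s hs
    have := hs.1
    have := sub_pos.2 hs.2
    positivity

lemma ofReal_tailSum (n : ℕ) :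
    ENNReal.ofReal (tailSum n) =
      ∫⁻ s in Ioo (0 : ℝ) 1, ENNReal.ofReal (4 * s ^ (2 * n) / (1 + s)) := by
  rw [tailSum, ENNReal.ofReal_tsum_of_nonneg (tailSum_term_nonneg n) (summable_tailSum n)]
  have h : ∀ k : ℕ, ENNReal.ofReal (1 / (((k : ℝ) + n + 1) * ((k : ℝ) + n + 1 - 1 / 2))) =
      ∫⁻ s in Ioo (0 : ℝ) 1, ENNReal.ofReal (4 * s ^ (2 * (k + n)) * (1 - s)) := by
    intro k
    rw [lintegral_pow_even_mul_one_sub]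
    push_cast
    rfl
  simp_rw [h]
  rw [← lintegral_tsum fun k ↦ (by fun_prop)]
  refine setLIntegral_congr_fun measurableSet_Ioo fun s hs ↦ ?_
  have h0 := hs.1
  have h1 := sub_pos.2 hs.2
  have hs2 : s ^ 2 < 1 := by nlinarith [hs.1, hs.2]
  have hsum : HasSum (fun k : ℕ ↦ 4 * s ^ (2 * (k + n)) * (1 - s))
        (4 * s ^ (2 * n) / (1 + s)) := by
    convert! (hasSum_geometric_of_lt_one (sq_nonneg s) hs2).mul_left
      (4 * s ^ (2 * n) * (1 - s)) using 1
    · ext k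
      ring
    · rw [show 1 - s ^ 2 = (1 - s) * (1 + s) by ring]
      field_simp
  rw [← ENNReal.ofReal_tsum_of_nonneg (fun k ↦ by positivity) hsum.summable, hsum.tsum_eq]

lemma lintegral_one_div_one_add_mul {p : ℝ} (hp : 0 < p) :
    ∫⁻ y in Ioo (0 : ℝ) 1, ENNReal.ofReal (1 / (1 + y * p)) =
      ENNReal.ofReal (log (1 + p) / p) := by
  rw [lintegral_Ioo_ofReal_deriv (F := fun y ↦ log (1 + y * p) / p) zero_le_one]
  · simp
  · refine ContinuousOn.div_const (ContinuousOn.log (by fun_prop) fun y hy ↦ ?_) p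
    have := hy.1
    positivity
  · intro y hy
    have := hy.1
    have h : HasDerivAt (fun y ↦ 1 + y * p) p y := by
      simpa using ((hasDerivAt_id y).mul_const p).const_add 1
    refine ((h.log (by positivity)).div_const p).congr_deriv ?_
    field_simp
  · intro y hy
    have := hy.1
    positivity

lemma lintegral_one_div_one_add_mul_sqrt {p q : ℝ} (hp : 0 < p) (hq : 0 < q)
    (hpq : p ^ 2 + q ^ 2 = 1) :
    ∫⁻ s in Ioo (0 : ℝ) 1, ENNReal.ofReal (1 / ((1 + s) * √(1 - (s * q) ^ 2))) =
      ENNReal.ofReal (log (1 + p) / p) := by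
  have hpos : ∀ s : ℝ, 0 ≤ s → s ≤ 1 → 0 < 1 - (s * q) ^ 2 := by
    intro s h0 h1
    have : (s * q) ^ 2 ≤ q ^ 2 := by
      rw [mul_pow]
      exact mul_le_of_le_one_left (sq_nonneg q) (pow_le_one₀ h0 h1)
    nlinarith [pow_pos hp 2]
  rw [lintegral_Ioo_ofReal_deriv
    (F := fun s ↦ (log (1 + s) - log (1 + q ^ 2 * s + p * √(1 - (s * q) ^ 2))) / p) zero_le_one]
  · have h1 : √(1 - (1 * q) ^ 2) = p := by
      rw [show 1 - (1 * q) ^ 2 = p ^ 2 by linarith, Real.sqrt_sq hp.le]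
    simp only [h1]
    rw [show 1 + q ^ 2 * 1 + p * p = 1 + 1 by linarith]
    simp [neg_div]
  · refine ContinuousOn.div_const (ContinuousOn.sub (ContinuousOn.log (by fun_prop) ?_)
      (ContinuousOn.log (by fun_prop) ?_)) p
    · intro s hs
      have := hs.1
      positivity
    · intro s hs
      have := hs.1
      positivity
  · intro s hs
    have h0 := hs.1
    have hr := hpos s hs.1.le hs.2.le
    have hr' := Real.sqrt_pos.2 hr
    have hsq := Real.sq_sqrt hr.le
    have hA : HasDerivAt (fun s : ℝ ↦ 1 + s) 1 s := (hasDerivAt_id s).const_add 1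
    have hB : HasDerivAt (fun s : ℝ ↦ 1 - (s * q) ^ 2) (-(2 * s * q ^ 2)) s := by
      refine ((((hasDerivAt_id s).mul_const q).pow 2).const_sub 1).congr_deriv ?_
      simp
      ring
    have hC : HasDerivAt (fun s : ℝ ↦ 1 + q ^ 2 * s) (q ^ 2) s := by
      simpa using ((hasDerivAt_id s).const_mul (q ^ 2)).const_add 1
    have hD := hC.add ((hB.sqrt hr.ne').const_mul p)
    have hE := ((hA.log (by positivity)).sub
      (hD.log (by simp only [Pi.add_apply]; positivity))).div_const p
    refine hE.congr_deriv ?_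
    simp only [Pi.add_apply]
    set r := √(1 - (s * q) ^ 2)
    field_simp
    linear_combination (-r) * hpq + p * hsq
  · intro s hs
    have := hs.1
    positivity

lemma lintegral_one_div_one_add_mul_sin {y : ℝ} (h0 : 0 < y) (h1 : y < 1) :
    ∫⁻ φ in Ioo 0 (π / 2), ENNReal.ofReal (1 / (1 + y * sin φ)) =
      ENNReal.ofReal (arccos y / √(1 - y ^ 2)) := by
  have hy : 0 < 1 - y ^ 2 := by nlinarith
  have hpi : (0 : ℝ) ≤ π / 2 := by positivity
  have hsin : ∀ φ ∈ Icc 0 (π / 2), 0 ≤ sin φ := fun φ hφ ↦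
    sin_nonneg_of_nonneg_of_le_pi hφ.1 (by linarith [hφ.2, pi_pos])
  rw [lintegral_Ioo_ofReal_deriv
    (F := fun φ ↦ arcsin ((y + sin φ) / (1 + y * sin φ)) / √(1 - y ^ 2)) hpi]
  · simp only [sin_pi_div_two, sin_zero, mul_one, mul_zero, add_zero, div_one]
    rw [add_comm y 1, div_self (by positivity), arcsin_one, ← sub_div, arccos]
  · refine ContinuousOn.div_const (continuous_arcsin.comp_continuousOn
      (ContinuousOn.div (by fun_prop) (by fun_prop) fun φ hφ ↦ ?_)) _
    have := hsin φ hφ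
    positivity
  · intro φ hφ
    have hs := hsin φ (Ioo_subset_Icc_self hφ)
    have hc : 0 < cos φ := cos_pos_of_mem_Ioo ⟨by linarith [hφ.1, pi_pos], hφ.2⟩
    have hsc := sin_sq_add_cos_sq φ
    have hd : 0 < 1 + y * sin φ := by positivity
    have hsq : 1 - ((y + sin φ) / (1 + y * sin φ)) ^ 2 =
        (√(1 - y ^ 2) * cos φ / (1 + y * sin φ)) ^ 2 := by
      rw [div_pow, div_pow, mul_pow, Real.sq_sqrt hy.le, eq_div_iff (by positivity), sub_mul,
        div_mul_cancel₀ _ (by positivity), cos_sq']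
      ring
    have hr := Real.sqrt_pos.2 hy
    have hlt : 0 < 1 - ((y + sin φ) / (1 + y * sin φ)) ^ 2 := by
      rw [hsq]
      positivity
    have hf : HasDerivAt (fun φ ↦ (y + sin φ) / (1 + y * sin φ))
        ((cos φ * (1 + y * sin φ) - (y + sin φ) * (y * cos φ)) / (1 + y * sin φ) ^ 2) φ :=
      ((hasDerivAt_sin φ).const_add y).div (((hasDerivAt_sin φ).const_mul y).const_add 1) hd.ne'
    have hg := (hasDerivAt_arcsin (x := (y + sin φ) / (1 + y * sin φ)) (by nlinarith)
      (by nlinarith)).comp φ hf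
    refine (hg.div_const √(1 - y ^ 2)).congr_deriv ?_
    rw [hsq, Real.sqrt_sq (by positivity)]
    have h2 := Real.sq_sqrt hy.le
    set r := √(1 - y ^ 2)
    field_simp
    rw [h2]
    ring
  · intro φ hφ
    have := hsin φ (Ioo_subset_Icc_self hφ)
    positivity

lemma lintegral_arccos_div_sqrt :
    ∫⁻ y in Ioo (0 : ℝ) 1, ENNReal.ofReal (arccos y / √(1 - y ^ 2)) =
      ENNReal.ofReal (π ^ 2 / 8) := by
  rw [lintegral_Ioo_ofReal_deriv (F := fun y ↦ -(arccos y ^ 2 / 2)) zero_le_one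
    (by have := continuous_arccos; fun_prop)]
  · congr 1
    simp only [arccos_one, arccos_zero]
    ring
  · intro y hy
    refine ((((hasDerivAt_arccos (by linarith [hy.1] : y ≠ -1) hy.2.ne).pow 2).div_const
      2).neg).congr_deriv ?_
    simp
    ring
  · intro y _
    exact div_nonneg (arccos_nonneg y) (Real.sqrt_nonneg _)

lemma tsum_ofReal_aCoef_mul_tailSum :
    ∑' n, ENNReal.ofReal (aCoef n * tailSum n) = ENNReal.ofReal π := by
  have hterm : ∀ n, ENNReal.ofReal (π / 2) * ENNReal.ofReal (aCoef n * tailSum n) =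
      ∫⁻ φ in Ioo 0 (π / 2), ∫⁻ s in Ioo (0 : ℝ) 1,
        ENNReal.ofReal (cos φ ^ (2 * n)) * (ENNReal.ofReal (invSqrtCoef n) *
          ENNReal.ofReal (4 * s ^ (2 * n) / (1 + s))) := by
    intro n
    simp_rw [lintegral_const_mul' _ _ ENNReal.ofReal_ne_top]
    rw [lintegral_mul_const _ (by fun_prop), lintegral_cos_pow_even, ← ofReal_tailSum,
      show aCoef n = invSqrtCoef n * invSqrtCoef n from sq _,
      ENNReal.ofReal_mul (mul_self_nonneg _), ENNReal.ofReal_mul (invSqrtCoef_nonneg n),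
      ENNReal.ofReal_mul (by positivity)]
    ring
  have hsum : ∀ φ ∈ Ioo 0 (π / 2), ∀ s ∈ Ioo (0 : ℝ) 1,
      ∑' n, ENNReal.ofReal (cos φ ^ (2 * n)) * (ENNReal.ofReal (invSqrtCoef n) *
          ENNReal.ofReal (4 * s ^ (2 * n) / (1 + s))) =
        4 * ENNReal.ofReal (1 / ((1 + s) * √(1 - (s * cos φ) ^ 2))) := by
    intro φ hφ s hs
    have hc : 0 < cos φ := cos_pos_of_mem_Ioo ⟨by linarith [hφ.1, pi_pos], hφ.2⟩
    have h0 := hs.1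
    have hlt : (s * cos φ) ^ 2 < 1 :=
      pow_lt_one₀ (by positivity) (mul_lt_one_of_nonneg_of_lt_one_left h0.le hs.2 (cos_le_one φ))
        two_ne_zero
    have h := (hasSum_invSqrtCoef (sq_nonneg _) hlt).mul_left (4 / (1 + s))
    have hnonneg := fun n ↦ mul_nonneg (div_nonneg zero_le_four (by linarith : 0 ≤ 1 + s))
      (mul_nonneg (invSqrtCoef_nonneg n) (pow_nonneg (sq_nonneg (s * cos φ)) n))
    rw [show (4 : ENNReal) = ENNReal.ofReal 4 by simp, ← ENNReal.ofReal_mul zero_le_four,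
      show 4 * (1 / ((1 + s) * √(1 - (s * cos φ) ^ 2))) =
        4 / (1 + s) * (1 / √(1 - (s * cos φ) ^ 2)) by field_simp,
      ← h.tsum_eq, ENNReal.ofReal_tsum_of_nonneg hnonneg h.summable]
    refine tsum_congr fun n ↦ ?_
    rw [← ENNReal.ofReal_mul (invSqrtCoef_nonneg n), ← ENNReal.ofReal_mul (by positivity)]
    congr 1
    ring
  have hmain : ENNReal.ofReal (π / 2) * ∑' n, ENNReal.ofReal (aCoef n * tailSum n) =
      ENNReal.ofReal (π / 2) * ENNReal.ofReal π := calc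
    _ = ∫⁻ φ in Ioo 0 (π / 2), ∫⁻ s in Ioo (0 : ℝ) 1,
        ∑' n, ENNReal.ofReal (cos φ ^ (2 * n)) * (ENNReal.ofReal (invSqrtCoef n) *
          ENNReal.ofReal (4 * s ^ (2 * n) / (1 + s))) := by
      rw [← ENNReal.tsum_mul_left]
      simp_rw [hterm]
      rw [← lintegral_tsum fun n ↦ (Measurable.lintegral_prod_right (by fun_prop)).aemeasurable]
      refine lintegral_congr fun φ ↦ ?_
      rw [lintegral_tsum fun n ↦ (by fun_prop)]
    _ = ∫⁻ φ in Ioo 0 (π / 2), ∫⁻ y in Ioo (0 : ℝ) 1,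
        4 * ENNReal.ofReal (1 / (1 + y * sin φ)) := by
      refine setLIntegral_congr_fun measurableSet_Ioo fun φ hφ ↦ ?_
      have hc : 0 < cos φ := cos_pos_of_mem_Ioo ⟨by linarith [hφ.1, pi_pos], hφ.2⟩
      have hs : 0 < sin φ := sin_pos_of_pos_of_lt_pi hφ.1 (by linarith [hφ.2, pi_pos])
      rw [setLIntegral_congr_fun measurableSet_Ioo (hsum φ hφ),
        lintegral_const_mul' _ _ (by simp), lintegral_const_mul' _ _ (by simp),
        lintegral_one_div_one_add_mul_sqrt hs hc (sin_sq_add_cos_sq φ),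
        lintegral_one_div_one_add_mul hs]
    _ = ∫⁻ y in Ioo (0 : ℝ) 1, ∫⁻ φ in Ioo 0 (π / 2),
        4 * ENNReal.ofReal (1 / (1 + y * sin φ)) :=
      lintegral_lintegral_swap (Measurable.aemeasurable (by fun_prop))
    _ = ∫⁻ y in Ioo (0 : ℝ) 1, 4 * ENNReal.ofReal (arccos y / √(1 - y ^ 2)) := by
      refine setLIntegral_congr_fun measurableSet_Ioo fun y hy ↦ ?_
      rw [lintegral_const_mul' _ _ (by simp), lintegral_one_div_one_add_mul_sin hy.1 hy.2]
    _ = _ := by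
      rw [lintegral_const_mul' _ _ (by simp), lintegral_arccos_div_sqrt,
        show (4 : ENNReal) = ENNReal.ofReal 4 by simp, ← ENNReal.ofReal_mul zero_le_four,
        ← ENNReal.ofReal_mul (by positivity)]
      congr 1
      ring
  exact (ENNReal.mul_right_inj (by simpa using pi_pos) ENNReal.ofReal_ne_top).1 hmain

/-- `π = ∑_{n≥0} ((1/2)_n/n!)²·( ∑_{k≥n+1} 1/(k(k-1/2)) )`;
in particular the double series converges. -/
theorem stmt_17 :
    (∀ n : ℕ, Summable (fun k : ℕ => 1 / (((k : ℝ) + n + 1) * ((k : ℝ) + n + 1 - 1 / 2)))) ∧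
    Summable (fun n : ℕ => aCoef n * tailSum n) ∧
    Real.pi = ∑' n : ℕ, aCoef n * tailSum n := by
  have hnonneg : ∀ n, 0 ≤ aCoef n * tailSum n := fun n ↦
    mul_nonneg (sq_nonneg _) (tsum_nonneg (tailSum_term_nonneg n))
  have hsummable : Summable (fun n : ℕ => aCoef n * tailSum n) := by
    have h := ENNReal.summable_toReal
      (tsum_ofReal_aCoef_mul_tailSum.trans_ne ENNReal.ofReal_ne_top)
    simpa only [ENNReal.toReal_ofReal (hnonneg _)] using h
  refine ⟨summable_tailSum, hsummable, ?_⟩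
  have h := tsum_ofReal_aCoef_mul_tailSum
  rw [← ENNReal.ofReal_tsum_of_nonneg hnonneg hsummable,
    ENNReal.ofReal_eq_ofReal_iff (tsum_nonneg hnonneg) pi_pos.le] at h
  exact h.symm
end
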